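/- arXiv:1303.2590 — 9 statements merged into one kernel-verified Lean document; each statement's English description precedes it below -/
import Mathlib

section
/- Let A be an associative unital algebra over ℂ and let X, P ∈ A satisfy X·P − P·X = c·1 for a scalar c ∈ ℂ. Then for all natural numbers m, n ≥ 1, X^m·P^n − P^n·X^m = Σ_{k=1}^{min(m,n)} c^k · k! · C(m,k) · C(n,k) · P^(n−k)·X^(m−k). In particular the commutator [X^m, P^n] depends only on the canonical commutation relation [X,P] = iħ·1 and is independent of the chosen quantization ordering. -/
open Finset

theorem aux_one {A : Type*} [Ring A] [Algebra ℂ A] (X P : A) (c : ℂ)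
    (h : X * P - P * X = c • (1 : A)) (n : ℕ) :
    X * P ^ n = P ^ n * X + (c * (n : ℂ)) • P ^ (n - 1) := by
  have hXP : X * P = P * X + c • (1 : A) := by rw [← h]; abel
  induction n with
  | zero => simp
  | succ n ih =>
    have e : (c * (n : ℂ)) • (P ^ (n - 1) * P) = (c * (n : ℂ)) • P ^ n := by
      cases n with
      | zero => simp
      | succ k => simp [pow_succ]
    rw [pow_succ, ← mul_assoc, ih, add_mul, mul_assoc, hXP, smul_mul_assoc, e, mul_add,
      mul_smul_comm, mul_one, ← mul_assoc, add_assoc, ← add_smul]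
    simp only [Nat.add_sub_cancel, Nat.cast_add, Nat.cast_one]
    congr 2
    ring

theorem aux_full {A : Type*} [Ring A] [Algebra ℂ A] (X P : A) (c : ℂ)
    (h : X * P - P * X = c • (1 : A)) (m n : ℕ) :
    X ^ m * P ^ n = ∑ k ∈ Finset.range (m + 1),
        (c ^ k * (Nat.factorial k : ℂ) * (m.choose k : ℂ) * (n.choose k : ℂ)) •
          (P ^ (n - k) * X ^ (m - k)) := by
  induction m with
  | zero => simp
  | succ m ih =>
    have step : ∀ k ∈ Finset.range (m + 1),
        X * ((c ^ k * (Nat.factorial k : ℂ) * (m.choose k : ℂ) * (n.choose k : ℂ)) •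
          (P ^ (n - k) * X ^ (m - k))) =
        (c ^ k * (Nat.factorial k : ℂ) * (m.choose k : ℂ) * (n.choose k : ℂ)) •
          (P ^ (n - k) * X ^ (m + 1 - k)) +
        (c ^ k * (Nat.factorial k : ℂ) * (m.choose k : ℂ) * (n.choose k : ℂ) *
          (c * ((n - k : ℕ) : ℂ))) • (P ^ (n - (k + 1)) * X ^ (m - k)) := by
      intro k hk
      have hk' : m + 1 - k = (m - k) + 1 := by
        have := Finset.mem_range.mp hk
        omega
      rw [mul_smul_comm, ← mul_assoc, aux_one X P c h, add_mul, smul_add, mul_assoc (P ^ (n - k)) X,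
        ← pow_succ', ← hk', smul_mul_assoc, smul_smul, Nat.sub_sub]
    rw [pow_succ', mul_assoc, ih, Finset.mul_sum, Finset.sum_congr rfl step,
      Finset.sum_add_distrib, Finset.sum_range_succ' _ (m + 1)]
    have ext : ∑ k ∈ Finset.range (m + 1),
        (c ^ k * (Nat.factorial k : ℂ) * (m.choose k : ℂ) * (n.choose k : ℂ)) •
          (P ^ (n - k) * X ^ (m + 1 - k)) = ∑ k ∈ Finset.range (m + 1 + 1),
        (c ^ k * (Nat.factorial k : ℂ) * (m.choose k : ℂ) * (n.choose k : ℂ)) •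
          (P ^ (n - k) * X ^ (m + 1 - k)) := by
      rw [Finset.sum_range_succ _ (m + 1)]
      simp
    rw [ext, Finset.sum_range_succ' _ (m + 1), add_right_comm, ← Finset.sum_add_distrib]
    congr 1
    · refine Finset.sum_congr rfl fun k _ => ?_
      rw [Nat.add_sub_add_right, ← add_smul]
      congr 1
      have e : (n.choose (k + 1) : ℂ) * ((k : ℂ) + 1) = (n.choose k : ℂ) * ((n - k : ℕ) : ℂ) := by
        exact_mod_cast Nat.choose_succ_right_eq n k
      rw [Nat.choose_succ_succ, Nat.factorial_succ]
      push_cast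
      linear_combination (-(c ^ (k + 1) * (k.factorial : ℂ) * (m.choose k : ℂ))) * e
    · simp

/-- If `X` and `P` satisfy `XP − PX = c·1`, then for all `m, n ≥ 1`,
`[Xᵐ, Pⁿ] = ∑_{k=1}^{min(m,n)} cᵏ k! C(m,k) C(n,k) P^(n−k) X^(m−k)`.
In particular the commutator `[Xᵐ, Pⁿ]` depends only on the commutation
relation and not on the chosen quantization ordering. -/
theorem commutator_pow_pow
    {A : Type*} [Ring A] [Algebra ℂ A] (X P : A) (c : ℂ)
    (h : X * P - P * X = c • (1 : A)) (m n : ℕ) (hm : 1 ≤ m) (hn : 1 ≤ n) :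
    X ^ m * P ^ n - P ^ n * X ^ m =
      ∑ k ∈ Finset.Icc 1 (min m n),
        (c ^ k * (Nat.factorial k : ℂ) * (m.choose k : ℂ) * (n.choose k : ℂ)) •
          (P ^ (n - k) * X ^ (m - k)) := by
  rw [aux_full X P c h m n, Finset.sum_range_succ']
  simp only [pow_zero, Nat.factorial_zero, Nat.cast_one, Nat.choose_zero_right, mul_one,
    one_smul, Nat.sub_zero, add_sub_cancel_right]
  rw [Finset.range_eq_Ico, Finset.sum_Ico_add' (fun k =>
    (c ^ k * (Nat.factorial k : ℂ) * (m.choose k : ℂ) * (n.choose k : ℂ)) •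
          (P ^ (n - k) * X ^ (m - k))) 0 m 1]
  symm
  apply Finset.sum_subset
  · intro k hk
    simp only [Finset.mem_Icc, Finset.mem_Ico] at *
    omega
  · intro k hk hk'
    simp only [Finset.mem_Icc, Finset.mem_Ico] at *
    have : n < k := by omega
    simp [Nat.choose_eq_zero_of_lt this]
end

section
/- For every Schwartz function ψ : ℝⁿ → ℂ and every z ∈ ℝ²ⁿ, the Born–Jordan–Wigner distribution Wig_BJ(ψ,ψ)(z) is real, i.e. conj(Wig_BJ(ψ,ψ)(z)) = Wig_BJ(ψ,ψ)(z). -/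
open MeasureTheory Real Complex

noncomputable section

/-- Euclidean dot product on `ℝⁿ`. -/
def dotR {n : ℕ} (p y : Fin n → ℝ) : ℝ := ∑ i, p i * y i

/-- The `τ`-Wigner cross-distribution
`Wig_τ(ψ,φ)(x,p) = (2πhbar)^(−n) ∫ e^(−(i/hbar) p·y) ψ(x+τy) conj(φ(x−(1−τ)y)) dy`. -/
def WigTau (hbar : ℝ) {n : ℕ} (τ : ℝ) (ψ φ : (Fin n → ℝ) → ℂ) (x p : Fin n → ℝ) : ℂ :=
  ((((2 * π * hbar) ^ n : ℝ))⁻¹ : ℂ) *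
    ∫ y : Fin n → ℝ,
      Complex.exp (-(Complex.I / (hbar : ℂ)) * (dotR p y : ℝ)) *
        ψ (x + τ • y) * (starRingEnd ℂ) (φ (x - (1 - τ) • y))

/-- The Born–Jordan–Wigner cross-distribution: the average of the
`τ`-Wigner distributions over `τ ∈ [0,1]`. -/
def WigBJ (hbar : ℝ) {n : ℕ} (ψ φ : (Fin n → ℝ) → ℂ) (x p : Fin n → ℝ) : ℂ :=
  ∫ τ in (0:ℝ)..1, WigTau hbar τ ψ φ x p

/-- The `hbar`-Fourier transform `Fψ(p) = (2πhbar)^(−n/2) ∫ e^(−(i/hbar) p·x) ψ(x) dx`. -/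
def FourierHbar (hbar : ℝ) {n : ℕ} (ψ : (Fin n → ℝ) → ℂ) (p : Fin n → ℝ) : ℂ :=
  ((Real.sqrt ((2 * π * hbar) ^ n))⁻¹ : ℂ) *
    ∫ x : Fin n → ℝ, Complex.exp (-(Complex.I / (hbar : ℂ)) * (dotR p x : ℝ)) * ψ x

/-- The Shubin `τ`-operator
`A_τψ(x) = (2πhbar)^(−n) ∫∫ e^((i/hbar) p·(x−y)) a(τx+(1−τ)y, p) ψ(y) dp dy`,
the inner integral being over `p`. -/
def ShubinOp (hbar : ℝ) {n : ℕ} (τ : ℝ) (a : ((Fin n → ℝ) × (Fin n → ℝ)) → ℂ)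
    (ψ : (Fin n → ℝ) → ℂ) (x : Fin n → ℝ) : ℂ :=
  ((((2 * π * hbar) ^ n : ℝ))⁻¹ : ℂ) *
    ∫ y : Fin n → ℝ,
      (∫ p : Fin n → ℝ,
          Complex.exp ((Complex.I / (hbar : ℂ)) * (dotR p (x - y) : ℝ)) *
            a (τ • x + (1 - τ) • y, p)) * ψ y

/-- The Born–Jordan operator: the average of the Shubin `τ`-operators
over `τ ∈ [0,1]`. -/
def BJOp (hbar : ℝ) {n : ℕ} (a : ((Fin n → ℝ) × (Fin n → ℝ)) → ℂ)
    (ψ : (Fin n → ℝ) → ℂ) (x : Fin n → ℝ) : ℂ :=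
  ∫ τ in (0:ℝ)..1, ShubinOp hbar τ a ψ x

/-- `Θ(x,p) = sin(p·x/2hbar)/(p·x/2hbar)` (with value `1` when `p·x = 0`). -/
def Theta (hbar : ℝ) {n : ℕ} (x p : Fin n → ℝ) : ℝ :=
  if dotR p x = 0 then 1
  else Real.sin (dotR p x / (2 * hbar)) / (dotR p x / (2 * hbar))

/-- The modified Heisenberg–Weyl operator
`T̂_τ(z₀)ψ(x) = e^((i/hbar)(p₀·x − (1−τ)p₀·x₀)) ψ(x−x₀)`. -/
def THW (hbar : ℝ) {n : ℕ} (τ : ℝ) (z₀ : (Fin n → ℝ) × (Fin n → ℝ))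
    (ψ : (Fin n → ℝ) → ℂ) (x : Fin n → ℝ) : ℂ :=
  Complex.exp ((Complex.I / (hbar : ℂ)) *
      ((dotR z₀.2 x - (1 - τ) * dotR z₀.2 z₀.1 : ℝ) : ℂ)) * ψ (x - z₀.1)

/-- The symplectic Fourier transform
`F_σ a(z) = (2πhbar)^(−n) ∫ e^(−(i/hbar)σ(z,z′)) a(z′) dz′`,
`σ((x,p),(x′,p′)) = p·x′ − p′·x`. -/
def symplFT (hbar : ℝ) {n : ℕ} (a : ((Fin n → ℝ) × (Fin n → ℝ)) → ℂ)
    (z : (Fin n → ℝ) × (Fin n → ℝ)) : ℂ :=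
  ((((2 * π * hbar) ^ n : ℝ))⁻¹ : ℂ) *
    ∫ z' : (Fin n → ℝ) × (Fin n → ℝ),
      Complex.exp (-(Complex.I / (hbar : ℂ)) *
        ((dotR z.2 z'.1 - dotR z'.2 z.1 : ℝ) : ℂ)) * a z'

/-- The cross-ambiguity function
`Amb(ψ,φ)(x,p) = (2πhbar)^(−n) ∫ e^(−(i/hbar) p·x′) ψ(x′+x/2) conj(φ(x′−x/2)) dx′`. -/
def Amb (hbar : ℝ) {n : ℕ} (ψ φ : (Fin n → ℝ) → ℂ) (x p : Fin n → ℝ) : ℂ :=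
  ((((2 * π * hbar) ^ n : ℝ))⁻¹ : ℂ) *
    ∫ x' : Fin n → ℝ,
      Complex.exp (-(Complex.I / (hbar : ℂ)) * (dotR p x' : ℝ)) *
        ψ (x' + (1 / 2 : ℝ) • x) * (starRingEnd ℂ) (φ (x' - (1 / 2 : ℝ) • x))

theorem conj_WigTau (hbar : ℝ) {n : ℕ} (τ : ℝ) (ψ : (Fin n → ℝ) → ℂ) (x p : Fin n → ℝ) :
    (starRingEnd ℂ) (WigTau hbar τ ψ ψ x p) = WigTau hbar (1 - τ) ψ ψ x p := by
  unfold WigTau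
  rw [map_mul, ← integral_conj]
  congr 1
  · simp [Complex.conj_ofNat]
  rw [← integral_neg_eq_self]
  congr 1
  funext y
  have h1 : dotR p (-y) = - dotR p y := by simp [dotR]
  have h2 : x - (1 - τ) • (-y) = x + (1 - τ) • y := by simp
  have h3 : x + τ • (-y) = x - (1 - (1 - τ)) • y := by
    rw [smul_neg, sub_sub_cancel, sub_eq_add_neg]
  rw [h1, h2, h3, map_mul, map_mul, ← Complex.exp_conj, Complex.conj_conj]
  have h4 : (starRingEnd ℂ) (-(Complex.I / (hbar : ℂ)) * ((-dotR p y : ℝ) : ℂ))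
      = -(Complex.I / (hbar : ℂ)) * ((dotR p y : ℝ) : ℂ) := by
    simp [neg_div]
  rw [h4]
  ring

/-- The Born–Jordan–Wigner distribution of a function is real:
`conj (Wig_BJ(ψ,ψ)(z)) = Wig_BJ(ψ,ψ)(z)`. -/
theorem wigBJ_real (hbar : ℝ) (hh : 0 < hbar) (n : ℕ) (hn : 1 ≤ n)
    (ψ : SchwartzMap (Fin n → ℝ) ℂ) (x p : Fin n → ℝ) :
    (starRingEnd ℂ) (WigBJ hbar (⇑ψ) (⇑ψ) x p) = WigBJ hbar (⇑ψ) (⇑ψ) x p := by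
  unfold WigBJ
  have h := intervalIntegral.integral_comp_sub_left
    (a := 0) (b := 1) (fun τ => WigTau hbar τ ψ ψ x p) 1
  rw [sub_self, sub_zero] at h
  rw [← h, intervalIntegral.integral_of_le zero_le_one,
    ← integral_conj]
  simp only [conj_WigTau, sub_sub_cancel]
  rw [← intervalIntegral.integral_of_le zero_le_one, ← h,
    intervalIntegral.integral_of_le zero_le_one]

end
end

section
/- For every real τ, every Schwartz symbol a : ℝ²ⁿ → ℂ and all Schwartz functions ψ, φ : ℝⁿ → ℂ, ∫_{ℝⁿ} (A_τψ)(x)·conj(φ(x)) dx = ∫_{ℝ²ⁿ} a(z)·Wig_τ(ψ,φ)(z) dz. -/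
open MeasureTheory Real Complex

noncomputable section

lemma shubin_norm_exp (h r : ℝ) : ‖Complex.exp ((Complex.I / (h : ℂ)) * (r : ℝ))‖ = 1 := by
  have : (Complex.I / (h : ℂ)) * (r : ℝ) = ((r / h : ℝ) : ℂ) * Complex.I := by
    push_cast; ring
  rw [this, Complex.norm_exp_ofReal_mul_I]

lemma shubin_decay {n : ℕ} (a : SchwartzMap ((Fin n → ℝ) × (Fin n → ℝ)) ℂ) :
    ∃ g : (Fin n → ℝ) → ℝ, Integrable g ∧ ∀ u p, ‖a (u, p)‖ ≤ g p := by
  obtain ⟨C, hC⟩ : ∃ C : ℝ, ∀ z, (1 + ‖z‖) ^ (n + 1) * ‖a z‖ ≤ C := by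
    have key := SchwartzMap.one_add_le_sup_seminorm_apply (𝕜 := ℝ) (m := (n + 1, 0)) (k := n + 1)
      (n := 0) le_rfl le_rfl a
    simp only [norm_iteratedFDeriv_zero] at key
    exact ⟨_, key⟩
  refine ⟨fun p => C * (1 + ‖p‖) ^ (-((n + 1 : ℕ) : ℝ)), ?_, fun u p => ?_⟩
  · refine (integrable_one_add_norm ?_).const_mul C
    simp
  · have h0 : 0 < 1 + ‖p‖ := by positivity
    beta_reduce
    rw [Real.rpow_neg h0.le, Real.rpow_natCast, ← div_eq_mul_inv, le_div_iff₀ (by positivity),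
      mul_comm]
    refine le_trans ?_ (hC (u, p))
    have : ‖p‖ ≤ ‖(u, p)‖ := norm_snd_le (u, p)
    gcongr

/-- The full integrand in the variables `((x, y), p)`. -/
def shubinH (hbar : ℝ) {n : ℕ} (τ : ℝ) (a : ((Fin n → ℝ) × (Fin n → ℝ)) → ℂ)
    (ψ φ : (Fin n → ℝ) → ℂ) (w : ((Fin n → ℝ) × (Fin n → ℝ)) × (Fin n → ℝ)) : ℂ :=
  Complex.exp ((Complex.I / (hbar : ℂ)) * (dotR w.2 (w.1.1 - w.1.2) : ℝ)) *
    a (τ • w.1.1 + (1 - τ) • w.1.2, w.2) * ψ w.1.2 * (starRingEnd ℂ) (φ w.1.1)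

lemma shubinH_integrable (hbar : ℝ) {n : ℕ} (τ : ℝ)
    (a : SchwartzMap ((Fin n → ℝ) × (Fin n → ℝ)) ℂ)
    (ψ φ : SchwartzMap (Fin n → ℝ) ℂ) :
    Integrable (shubinH hbar τ (⇑a) (⇑ψ) (⇑φ)) := by
  obtain ⟨g, hg, hb⟩ := shubin_decay a
  have h1 : Integrable (fun w : ((Fin n → ℝ) × (Fin n → ℝ)) × (Fin n → ℝ) =>
      (‖φ w.1.1‖ * ‖ψ w.1.2‖) * g w.2) :=
    ((φ.integrable (μ := volume)).norm.mul_prod (ψ.integrable (μ := volume)).norm).mul_prod hg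
  refine h1.mono' ?_ (Filter.Eventually.of_forall fun w => ?_)
  · refine Continuous.aestronglyMeasurable ?_
    have ha := a.continuous
    have hψ := ψ.continuous
    have hφ := φ.continuous
    have hc : Continuous (starRingEnd ℂ) := Complex.continuous_conj
    unfold shubinH dotR
    fun_prop
  · unfold shubinH
    rw [norm_mul, norm_mul, norm_mul, shubin_norm_exp, RCLike.norm_conj, one_mul]
    have := hb (τ • w.1.1 + (1 - τ) • w.1.2) w.2
    calc _ ≤ g w.2 * ‖ψ w.1.2‖ * ‖φ w.1.1‖ := by gcongr
      _ = _ := by ring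

/-- The change of variables `((u, p), v) ↦ ((u - (1 - τ) v, u + τ v), p)`. -/
def shubinS {n : ℕ} (τ : ℝ) (w : ((Fin n → ℝ) × (Fin n → ℝ)) × (Fin n → ℝ)) :
    ((Fin n → ℝ) × (Fin n → ℝ)) × (Fin n → ℝ) :=
  ((w.1.1 - (1 - τ) • w.2, w.1.1 + τ • w.2), w.1.2)

lemma shubinT_mp {n : ℕ} (τ : ℝ) :
    MeasurePreserving (fun w : (Fin n → ℝ) × (Fin n → ℝ) =>
      (w.1 - (1 - τ) • w.2, w.1 + τ • w.2)) := by
  have h1 : MeasurePreserving (fun w : (Fin n → ℝ) × (Fin n → ℝ) =>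
      (w.1, w.2 - (1 - τ) • w.1)) := by
    refine MeasurePreserving.skew_product (f := id) (g := fun x y => y - (1 - τ) • x)
      (MeasurePreserving.id volume) ?_ ?_
    · unfold Function.uncurry; fun_prop
    · exact Filter.Eventually.of_forall fun x =>
        (measurePreserving_sub_right volume ((1 - τ) • x)).map_eq
  have h2 : MeasurePreserving (fun w : (Fin n → ℝ) × (Fin n → ℝ) => w.swap) :=
    Measure.measurePreserving_swap
  have h3 : MeasurePreserving (fun w : (Fin n → ℝ) × (Fin n → ℝ) => (w.1, w.1 + w.2)) :=
    measurePreserving_prod_add volume volume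
  convert h3.comp (h2.comp (h1.comp h2)) using 1
  funext w
  simp only [Function.comp, Prod.swap, Prod.mk.injEq, true_and]
  module

lemma shubinS_mp {n : ℕ} (τ : ℝ) : MeasurePreserving (shubinS (n := n) τ) := by
  have h1 := (measurePreserving_prodAssoc (volume : Measure (Fin n → ℝ))
    (volume : Measure (Fin n → ℝ)) (volume : Measure (Fin n → ℝ)))
  have h2 : MeasurePreserving (fun w : (Fin n → ℝ) × (Fin n → ℝ) => w.swap) :=
    Measure.measurePreserving_swap
  have h3 := (MeasurePreserving.id (volume : Measure (Fin n → ℝ))).prod h2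
  have h4 := (shubinT_mp (n := n) τ).prod (MeasurePreserving.id (volume : Measure (Fin n → ℝ)))
  exact h4.comp ((h1.symm _).comp (h3.comp h1))

/-- The fundamental relation between Shubin `τ`-operators and the `τ`-Wigner
distribution: `⟨A_τψ, conj φ⟩ = ⟨a, Wig_τ(ψ,φ)⟩`. -/
theorem shubinOp_wigTau (hbar : ℝ) (hh : 0 < hbar) (n : ℕ) (hn : 1 ≤ n) (τ : ℝ)
    (a : SchwartzMap ((Fin n → ℝ) × (Fin n → ℝ)) ℂ)
    (ψ φ : SchwartzMap (Fin n → ℝ) ℂ) :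
    ∫ x : Fin n → ℝ, ShubinOp hbar τ (⇑a) (⇑ψ) x * (starRingEnd ℂ) (φ x) =
      ∫ z : (Fin n → ℝ) × (Fin n → ℝ), a z * WigTau hbar τ (⇑ψ) (⇑φ) z.1 z.2 := by
  have hH := shubinH_integrable hbar τ a ψ φ
  have hS := shubinS_mp (n := n) τ
  have hK : Integrable (fun w => shubinH hbar τ (⇑a) (⇑ψ) (⇑φ) (shubinS τ w)) :=
    hS.integrable_comp_of_integrable hH
  have hKH : ∫ w, shubinH hbar τ (⇑a) (⇑ψ) (⇑φ) (shubinS τ w)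
      = ∫ w, shubinH hbar τ (⇑a) (⇑ψ) (⇑φ) w := by
    have := integral_map (μ := volume) (φ := shubinS (n := n) τ) hS.measurable.aemeasurable
      (f := shubinH hbar τ (⇑a) (⇑ψ) (⇑φ)) (by rw [hS.map_eq]; exact hH.aestronglyMeasurable)
    rw [hS.map_eq] at this
    exact this.symm
  have eL : ∫ w, shubinH hbar τ (⇑a) (⇑ψ) (⇑φ) w =
      ∫ x, ∫ y, ∫ p, shubinH hbar τ (⇑a) (⇑ψ) (⇑φ) ((x, y), p) := by
    refine (integral_prod _ hH).trans ?_
    exact integral_prod _ (Integrable.integral_prod_left hH)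
  have eR : ∫ w, shubinH hbar τ (⇑a) (⇑ψ) (⇑φ) (shubinS τ w) =
      ∫ z : (Fin n → ℝ) × (Fin n → ℝ), ∫ v,
        shubinH hbar τ (⇑a) (⇑ψ) (⇑φ) (shubinS τ (z, v)) :=
    integral_prod _ hK
  have fL : ∀ x, ShubinOp hbar τ (⇑a) (⇑ψ) x * (starRingEnd ℂ) (φ x) =
      ((((2 * π * hbar) ^ n : ℝ))⁻¹ : ℂ) *
        ∫ y, ∫ p, shubinH hbar τ (⇑a) (⇑ψ) (⇑φ) ((x, y), p) := by
    intro x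
    unfold ShubinOp shubinH
    simp only [integral_mul_const]
    ring
  have fR : ∀ z : (Fin n → ℝ) × (Fin n → ℝ), a z * WigTau hbar τ (⇑ψ) (⇑φ) z.1 z.2 =
      ((((2 * π * hbar) ^ n : ℝ))⁻¹ : ℂ) *
        ∫ v, shubinH hbar τ (⇑a) (⇑ψ) (⇑φ) (shubinS τ (z, v)) := by
    rintro ⟨u, p⟩
    unfold WigTau
    rw [mul_left_comm, ← integral_const_mul]
    congr 1
    refine integral_congr_ae (Filter.Eventually.of_forall fun v => ?_)
    have e1 : (u - (1 - τ) • v) - (u + τ • v) = -v := by module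
    have e2 : τ • (u - (1 - τ) • v) + (1 - τ) • (u + τ • v) = u := by module
    have e3 : dotR p (-v) = -dotR p v := by simp [dotR]
    simp only [shubinH, shubinS, e1, e2, e3]
    push_cast
    rw [mul_neg, ← neg_mul]
    ring
  simp only [fL, fR]
  rw [integral_const_mul, integral_const_mul, ← eL, ← eR, hKH]

end
end

section
/- For every Schwartz symbol a : ℝ²ⁿ → ℂ and all Schwartz functions ψ, φ : ℝⁿ → ℂ, ∫_{ℝⁿ} (A_BJψ)(x)·conj(φ(x)) dx = ∫_{ℝ²ⁿ} a(z)·Wig_BJ(ψ,φ)(z) dz. -/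
open MeasureTheory Real Complex

noncomputable section

section Helpers

variable {A B C D : Type*} [MeasurableSpace A] [MeasurableSpace B] [MeasurableSpace C]
  [MeasurableSpace D]

/-- Iterated Fubini for four variables, shape `x, τ, y, p`. -/
lemma fub_left (μ : Measure A) (ν : Measure B) (ρ : Measure C) (σ : Measure D)
    [SigmaFinite μ] [SigmaFinite ν] [SigmaFinite ρ] [SigmaFinite σ]
    (f : (A × B) × (C × D) → ℂ) (hf : Integrable f ((μ.prod ν).prod (ρ.prod σ))) :
    ∫ c, ∫ a, ∫ d, ∫ b, f ((a, b), (c, d)) ∂ν ∂σ ∂μ ∂ρ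
      = ∫ z, f z ∂((μ.prod ν).prod (ρ.prod σ)) := by
  have e1 : MeasurePreserving (fun w : C × (A × (D × B)) => ((w.2.1, w.2.2.2), (w.1, w.2.2.1)))
      (ρ.prod (μ.prod (σ.prod ν))) ((μ.prod ν).prod (ρ.prod σ)) := by
    have h1 : MeasurePreserving (Prod.swap : C × (A × (D × B)) → _)
      (ρ.prod (μ.prod (σ.prod ν))) ((μ.prod (σ.prod ν)).prod ρ) := Measure.measurePreserving_swap
    have h2 : MeasurePreserving (Prod.map (Prod.map id Prod.swap) id : (A × (D × B)) × C → _)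
      ((μ.prod (σ.prod ν)).prod ρ) ((μ.prod (ν.prod σ)).prod ρ) :=
      ((MeasurePreserving.id μ).prod Measure.measurePreserving_swap).prod (MeasurePreserving.id ρ)
    have h3 : MeasurePreserving (Prod.map MeasurableEquiv.prodAssoc.symm id :
        (A × (B × D)) × C → ((A × B) × D) × C)
      ((μ.prod (ν.prod σ)).prod ρ) (((μ.prod ν).prod σ).prod ρ) :=
      ((measurePreserving_prodAssoc μ ν σ).symm _).prod (MeasurePreserving.id ρ)
    have h4 := measurePreserving_prodAssoc (μ.prod ν) σ ρ
    have h5 : MeasurePreserving (Prod.map id Prod.swap : (A × B) × (D × C) → _)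
      ((μ.prod ν).prod (σ.prod ρ)) ((μ.prod ν).prod (ρ.prod σ)) :=
      (MeasurePreserving.id _).prod Measure.measurePreserving_swap
    exact h5.comp (h4.comp (h3.comp (h2.comp h1)))
  have hg := e1.integrable_comp_of_integrable hf
  have key : ∫ z, f z ∂((μ.prod ν).prod (ρ.prod σ)) =
      ∫ w, (f ∘ fun w : C × (A × (D × B)) => ((w.2.1, w.2.2.2), (w.1, w.2.2.1))) w
        ∂(ρ.prod (μ.prod (σ.prod ν))) := by
    rw [← e1.map_eq, integral_map e1.aemeasurable]
    · rfl
    · rw [e1.map_eq]; exact hf.aestronglyMeasurable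
  rw [key, integral_prod _ hg]
  refine integral_congr_ae ?_
  filter_upwards [hg.prod_right_ae] with c hc
  rw [integral_prod _ hc]
  refine integral_congr_ae ?_
  filter_upwards [hc.prod_right_ae] with a ha
  rw [integral_prod _ ha]
  rfl

/-- Iterated Fubini for four variables, shape `(x, p), τ, y`. -/
lemma fub_right (μ : Measure A) (ν : Measure B) (ρ : Measure C) (σ : Measure D)
    [SigmaFinite μ] [SigmaFinite ν] [SigmaFinite ρ] [SigmaFinite σ]
    (f : (A × B) × (C × D) → ℂ) (hf : Integrable f ((μ.prod ν).prod (ρ.prod σ))) :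
    ∫ z : C × B, ∫ a, ∫ d, f ((a, z.2), (z.1, d)) ∂σ ∂μ ∂(ρ.prod ν)
      = ∫ z, f z ∂((μ.prod ν).prod (ρ.prod σ)) := by
  have e1 : MeasurePreserving (fun w : (C × B) × (A × D) => ((w.2.1, w.1.2), (w.1.1, w.2.2)))
      ((ρ.prod ν).prod (μ.prod σ)) ((μ.prod ν).prod (ρ.prod σ)) := by
    have h1 := (measurePreserving_prodAssoc (ρ.prod ν) μ σ).symm
    have h2 : MeasurePreserving (Prod.map Prod.swap id : ((C × B) × A) × D → _)
      (((ρ.prod ν).prod μ).prod σ) ((μ.prod (ρ.prod ν)).prod σ) :=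
      Measure.measurePreserving_swap.prod (MeasurePreserving.id σ)
    have h3 : MeasurePreserving (Prod.map (Prod.map id Prod.swap) id : (A × (C × B)) × D → _)
      ((μ.prod (ρ.prod ν)).prod σ) ((μ.prod (ν.prod ρ)).prod σ) :=
      ((MeasurePreserving.id μ).prod Measure.measurePreserving_swap).prod (MeasurePreserving.id σ)
    have h4 : MeasurePreserving (Prod.map MeasurableEquiv.prodAssoc.symm id :
        (A × (B × C)) × D → ((A × B) × C) × D)
      ((μ.prod (ν.prod ρ)).prod σ) (((μ.prod ν).prod ρ).prod σ) :=
      ((measurePreserving_prodAssoc μ ν ρ).symm _).prod (MeasurePreserving.id σ)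
    have h5 := measurePreserving_prodAssoc (μ.prod ν) ρ σ
    exact h5.comp (h4.comp (h3.comp (h2.comp h1)))
  have hg := e1.integrable_comp_of_integrable hf
  have key : ∫ z, f z ∂((μ.prod ν).prod (ρ.prod σ)) =
      ∫ w, (f ∘ fun w : (C × B) × (A × D) => ((w.2.1, w.1.2), (w.1.1, w.2.2))) w
        ∂((ρ.prod ν).prod (μ.prod σ)) := by
    rw [← e1.map_eq, integral_map e1.aemeasurable]
    · rfl
    · rw [e1.map_eq]; exact hf.aestronglyMeasurable
  rw [key, integral_prod _ hg]
  refine integral_congr_ae ?_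
  filter_upwards [hg.prod_right_ae] with c hc
  rw [integral_prod _ hc]
  rfl

end Helpers

/-- The shear change of variables `(x, y) ↦ (x - (1-τ) y, x + τ y)` preserves volume. -/
lemma shear_mp {n : ℕ} (τ : ℝ) :
    MeasurePreserving (fun w : (Fin n → ℝ) × (Fin n → ℝ) =>
      (w.1 - (1 - τ) • w.2, w.1 + τ • w.2)) (volume.prod volume) (volume.prod volume) := by
  have h1 : MeasurePreserving (fun w : (Fin n → ℝ) × (Fin n → ℝ) => (w.1, w.2 - (1 - τ) • w.1))
      (volume.prod volume) (volume.prod volume) := by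
    refine (MeasurePreserving.id (volume : Measure (Fin n → ℝ))).skew_product
      (g := fun y x => x - (1 - τ) • y) ?_ ?_
    · exact (by fun_prop : Continuous fun w : (Fin n → ℝ) × (Fin n → ℝ) =>
        w.2 - (1 - τ) • w.1).measurable
    · exact Filter.Eventually.of_forall fun y =>
        (measurePreserving_sub_right volume ((1 - τ) • y)).map_eq
  have h2 : MeasurePreserving (fun w : (Fin n → ℝ) × (Fin n → ℝ) => (w.1, w.2 + w.1))
      (volume.prod volume) (volume.prod volume) := by
    refine (MeasurePreserving.id (volume : Measure (Fin n → ℝ))).skew_product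
      (g := fun y x => x + y) ?_ ?_
    · exact (by fun_prop : Continuous fun w : (Fin n → ℝ) × (Fin n → ℝ) =>
        w.2 + w.1).measurable
    · exact Filter.Eventually.of_forall fun y =>
        (measurePreserving_add_right volume y).map_eq
  have h3 := h2.comp (Measure.measurePreserving_swap.comp (h1.comp
    (Measure.measurePreserving_swap (μ := (volume : Measure (Fin n → ℝ)))
      (ν := (volume : Measure (Fin n → ℝ))))))
  convert h3 using 1
  funext w
  refine Prod.ext rfl ?_
  simp only [Function.comp, Prod.swap]
  funext i
  simp
  ring

/-- The common integrand, in the variables `((τ, p), (x, y))`. -/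
def bjF (hbar : ℝ) {n : ℕ} (a : SchwartzMap ((Fin n → ℝ) × (Fin n → ℝ)) ℂ)
    (ψ φ : SchwartzMap (Fin n → ℝ) ℂ)
    (w : (ℝ × (Fin n → ℝ)) × ((Fin n → ℝ) × (Fin n → ℝ))) : ℂ :=
  Complex.exp ((Complex.I / (hbar : ℂ)) * (dotR w.1.2 (w.2.1 - w.2.2) : ℝ)) *
    a (w.1.1 • w.2.1 + (1 - w.1.1) • w.2.2, w.1.2) * ψ w.2.2 * (starRingEnd ℂ) (φ w.2.1)

lemma bjF_cont (hbar : ℝ) {n : ℕ} (a : SchwartzMap ((Fin n → ℝ) × (Fin n → ℝ)) ℂ)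
    (ψ φ : SchwartzMap (Fin n → ℝ) ℂ) : Continuous (bjF hbar a ψ φ) := by
  have ha := a.continuous
  have hψ := ψ.continuous
  have hφ := φ.continuous
  have hs : Continuous (starRingEnd ℂ) := Complex.continuous_conj
  unfold bjF dotR
  refine ((Continuous.mul ?_ ?_).mul ?_).mul ?_
  · simp only [Pi.sub_apply]
    fun_prop
  · exact ha.comp (by fun_prop)
  · exact hψ.comp (by fun_prop)
  · exact hs.comp (hφ.comp (by fun_prop))

lemma bjF_int (hbar : ℝ) {n : ℕ} (a : SchwartzMap ((Fin n → ℝ) × (Fin n → ℝ)) ℂ)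
    (ψ φ : SchwartzMap (Fin n → ℝ) ℂ) :
    Integrable (bjF hbar a ψ φ)
      (((volume.restrict (Set.Ioc (0:ℝ) 1)).prod volume).prod (volume.prod volume)) := by
  obtain ⟨K, hK⟩ : ∃ K : ℝ, ∀ z, (1 + ‖z‖) ^ (n + 1) * ‖a z‖ ≤ K := by
    have h := SchwartzMap.one_add_le_sup_seminorm_apply (𝕜 := ℝ) (m := (n + 1, 0)) (k := n + 1)
      (n := 0) le_rfl le_rfl a
    simp only [norm_iteratedFDeriv_zero] at h
    exact ⟨_, h⟩
  have hg : Integrable (fun p : Fin n → ℝ => K * (1 + ‖p‖) ^ (-((n:ℝ) + 1))) volume := by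
    refine Integrable.const_mul (integrable_one_add_norm ?_) K
    simp
  have h1 : Integrable (fun _ : ℝ => (1:ℝ)) (volume.restrict (Set.Ioc (0:ℝ) 1)) :=
    integrable_const _
  have hG := (h1.mul_prod hg).mul_prod ((φ.integrable (μ := volume)).norm.mul_prod
    (ψ.integrable (μ := volume)).norm)
  refine hG.mono' (bjF_cont hbar a ψ φ).aestronglyMeasurable (Filter.Eventually.of_forall ?_)
  rintro ⟨⟨τ, p⟩, ⟨x, y⟩⟩
  have hexp : ‖Complex.exp ((Complex.I / (hbar : ℂ)) * (dotR p (x - y) : ℝ))‖ = 1 := by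
    have : (Complex.I / (hbar : ℂ)) * (dotR p (x - y) : ℝ)
        = ((dotR p (x - y) / hbar : ℝ) : ℂ) * Complex.I := by
      push_cast; ring
    rw [this, Complex.norm_exp_ofReal_mul_I]
  have hb : ‖a (τ • x + (1 - τ) • y, p)‖ ≤ K * (1 + ‖p‖) ^ (-((n:ℝ) + 1)) := by
    have hp : 0 < 1 + ‖p‖ := by positivity
    rw [Real.rpow_neg hp.le, ← div_eq_mul_inv]
    have : (1 + ‖p‖) ^ ((n:ℝ) + 1) = (1 + ‖p‖) ^ (n + 1) := by
      exact_mod_cast Real.rpow_natCast (1 + ‖p‖) (n + 1)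
    rw [this, le_div_iff₀ (by positivity), mul_comm]
    refine le_trans ?_ (hK (τ • x + (1 - τ) • y, p))
    gcongr
    exact norm_snd_le (τ • x + (1 - τ) • y, p)
  simp only [bjF, norm_mul, hexp, RCLike.norm_conj, one_mul]
  rw [mul_assoc, mul_comm ‖ψ y‖]
  gcongr

/-- The fundamental relation between the Born–Jordan operator and the
Born–Jordan–Wigner distribution: `⟨A_BJψ, conj φ⟩ = ⟨a, Wig_BJ(ψ,φ)⟩`. -/
theorem bjOp_wigBJ (hbar : ℝ) (hh : 0 < hbar) (n : ℕ) (hn : 1 ≤ n)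
    (a : SchwartzMap ((Fin n → ℝ) × (Fin n → ℝ)) ℂ)
    (ψ φ : SchwartzMap (Fin n → ℝ) ℂ) :
    ∫ x : Fin n → ℝ, BJOp hbar (⇑a) (⇑ψ) x * (starRingEnd ℂ) (φ x) =
      ∫ z : (Fin n → ℝ) × (Fin n → ℝ), a z * WigBJ hbar (⇑ψ) (⇑φ) z.1 z.2 := by
  set S : (ℝ × (Fin n → ℝ)) × ((Fin n → ℝ) × (Fin n → ℝ)) →
      (ℝ × (Fin n → ℝ)) × ((Fin n → ℝ) × (Fin n → ℝ)) :=
    fun w => (w.1, (w.2.1 - (1 - w.1.1) • w.2.2, w.2.1 + w.1.1 • w.2.2)) with hSdef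
  have hS : MeasurePreserving S
      (((volume.restrict (Set.Ioc (0:ℝ) 1)).prod volume).prod (volume.prod volume))
      (((volume.restrict (Set.Ioc (0:ℝ) 1)).prod volume).prod (volume.prod volume)) := by
    refine (MeasurePreserving.id _).skew_product
      (g := fun (u : ℝ × (Fin n → ℝ)) (v : (Fin n → ℝ) × (Fin n → ℝ)) =>
        (v.1 - (1 - u.1) • v.2, v.1 + u.1 • v.2)) ?_ ?_
    · exact (by fun_prop : Continuous
        fun w : (ℝ × (Fin n → ℝ)) × ((Fin n → ℝ) × (Fin n → ℝ)) =>
        (w.2.1 - (1 - w.1.1) • w.2.2, w.2.1 + w.1.1 • w.2.2)).measurable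
    · exact Filter.Eventually.of_forall fun u => (shear_mp u.1).map_eq
  have hF := bjF_int hbar a ψ φ
  have hFS := hS.integrable_comp_of_integrable hF
  have key : ∫ z, bjF hbar a ψ φ z
      ∂(((volume.restrict (Set.Ioc (0:ℝ) 1)).prod volume).prod (volume.prod volume)) =
      ∫ z, (bjF hbar a ψ φ ∘ S) z
      ∂(((volume.restrict (Set.Ioc (0:ℝ) 1)).prod volume).prod (volume.prod volume)) := by
    conv_lhs => rw [← hS.map_eq]
    rw [integral_map hS.aemeasurable (bjF_cont hbar a ψ φ).aestronglyMeasurable]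
    rfl
  rw [← fub_left _ _ _ _ _ hF, ← fub_right _ _ _ _ _ hFS] at key
  set c : ℂ := ((((2 * π * hbar) ^ n : ℝ))⁻¹ : ℂ) with hc
  have hL : ∀ x : Fin n → ℝ, BJOp hbar (⇑a) (⇑ψ) x * (starRingEnd ℂ) (φ x) =
      c * ∫ τ in Set.Ioc (0:ℝ) 1, ∫ y, ∫ p, bjF hbar a ψ φ ((τ, p), (x, y)) := by
    intro x
    simp only [BJOp, ShubinOp, bjF]
    rw [intervalIntegral.integral_of_le zero_le_one]
    simp only [integral_mul_const, integral_const_mul]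
    rw [← hc, mul_assoc]
  have hR : ∀ z : (Fin n → ℝ) × (Fin n → ℝ), a z * WigBJ hbar (⇑ψ) (⇑φ) z.1 z.2 =
      c * ∫ τ in Set.Ioc (0:ℝ) 1, ∫ y, (bjF hbar a ψ φ ∘ S) ((τ, z.2), (z.1, y)) := by
    rintro ⟨x, p⟩
    simp only [WigBJ, WigTau]
    rw [intervalIntegral.integral_of_le zero_le_one, integral_const_mul, ← hc,
      mul_left_comm, ← integral_const_mul]
    congr 1
    refine integral_congr_ae (Filter.Eventually.of_forall fun τ => ?_)
    simp only
    rw [← integral_const_mul]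
    refine integral_congr_ae (Filter.Eventually.of_forall fun y => ?_)
    simp only [Function.comp, hSdef, bjF]
    have e1 : x - (1 - τ) • y - (x + τ • y) = -y := by
      funext i; simp; ring
    have e2 : τ • (x - (1 - τ) • y) + (1 - τ) • (x + τ • y) = x := by
      funext i; simp; ring
    have e3 : dotR p (-y) = - dotR p y := by simp [dotR]
    rw [e1, e2, e3]
    push_cast
    rw [mul_neg, neg_mul]
    ring
  simp only [hL, hR]
  rw [integral_const_mul, integral_const_mul, key]
  rfl

end
end

section
/- For every real τ, every Schwartz symbol a : ℝ²ⁿ → ℂ and all Schwartz functions ψ, φ : ℝⁿ → ℂ, ∫_{ℝⁿ} (A_τψ)(x)·conj(φ(x)) dx = ∫_{ℝⁿ} ψ(y)·conj((B_{1−τ}φ)(y)) dy, where B_{1−τ} is the Shubin (1−τ)-operator with symbol conj(a). In other words, the formal adjoint of Op_τ(a) is Op_{1−τ}(conj(a)). -/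
open MeasureTheory Real Complex

noncomputable section

/-- The (unnormalised) kernel of the Shubin operator. -/
def shubinKer (hbar : ℝ) {n : ℕ} (τ : ℝ) (a : ((Fin n → ℝ) × (Fin n → ℝ)) → ℂ)
    (x y : Fin n → ℝ) : ℂ :=
  ∫ p : Fin n → ℝ,
    Complex.exp ((Complex.I / (hbar : ℂ)) * (dotR p (x - y) : ℝ)) *
      a (τ • x + (1 - τ) • y, p)

lemma norm_shubin_phase (hbar t : ℝ) :
    ‖Complex.exp ((Complex.I / (hbar : ℂ)) * (t : ℝ))‖ = 1 := by
  have : (Complex.I / (hbar : ℂ)) * (t : ℝ) = ((t / hbar : ℝ) : ℂ) * Complex.I := by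
    push_cast; ring
  rw [this, Complex.norm_exp_ofReal_mul_I]

lemma conj_shubin_phase (hbar t : ℝ) :
    (starRingEnd ℂ) (Complex.exp ((Complex.I / (hbar : ℂ)) * (t : ℝ))) =
      Complex.exp ((Complex.I / (hbar : ℂ)) * ((-t : ℝ) : ℂ)) := by
  rw [← Complex.exp_conj]
  congr 1
  simp
  ring

lemma dotR_sub_swap {n : ℕ} (p x y : Fin n → ℝ) : -dotR p (x - y) = dotR p (y - x) := by
  unfold dotR
  rw [← Finset.sum_neg_distrib]
  refine Finset.sum_congr rfl fun i _ => ?_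
  simp only [Pi.sub_apply]
  ring

lemma conj_shubinKer (hbar : ℝ) {n : ℕ} (τ : ℝ) (a : ((Fin n → ℝ) × (Fin n → ℝ)) → ℂ)
    (x y : Fin n → ℝ) :
    (starRingEnd ℂ) (shubinKer hbar (1 - τ) (fun z => (starRingEnd ℂ) (a z)) y x) =
      shubinKer hbar τ a x y := by
  unfold shubinKer
  rw [← integral_conj]
  refine integral_congr_ae (Filter.Eventually.of_forall fun p => ?_)
  simp only [map_mul, Complex.conj_conj]
  rw [conj_shubin_phase, dotR_sub_swap, sub_sub_cancel, add_comm]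

lemma shubinKer_bound (hbar : ℝ) {n : ℕ} (τ : ℝ)
    (a : SchwartzMap ((Fin n → ℝ) × (Fin n → ℝ)) ℂ) :
    ∃ C : ℝ, ∀ x y, ‖shubinKer hbar τ (⇑a) x y‖ ≤ C := by
  obtain ⟨D, hD⟩ : ∃ D : ℝ, ∀ z, (1 + ‖z‖) ^ (n + 1) * ‖a z‖ ≤ D := by
    refine ⟨2 ^ (n + 1) * (Finset.Iic (n + 1, 0)).sup
      (fun m => SchwartzMap.seminorm ℝ m.1 m.2) a, fun z => ?_⟩
    have := SchwartzMap.one_add_le_sup_seminorm_apply (𝕜 := ℝ) (m := (n + 1, 0))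
      (k := n + 1) (n := 0) le_rfl le_rfl a z
    rwa [norm_iteratedFDeriv_zero] at this
  have hint : Integrable (fun p : Fin n → ℝ => D * (1 + ‖p‖) ^ (-((n : ℝ) + 1))) := by
    refine Integrable.const_mul (integrable_one_add_norm ?_) D
    simp
  refine ⟨∫ p : Fin n → ℝ, D * (1 + ‖p‖) ^ (-((n : ℝ) + 1)), fun x y => ?_⟩
  refine norm_integral_le_of_norm_le hint (Filter.Eventually.of_forall fun p => ?_)
  rw [norm_mul, norm_shubin_phase, one_mul]
  have hp : 0 < 1 + ‖p‖ := by positivity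
  have h1 : (1 + ‖p‖) ^ (-((n : ℝ) + 1)) = ((1 + ‖p‖) ^ (n + 1))⁻¹ := by
    rw [Real.rpow_neg hp.le]
    congr 1
    exact_mod_cast Real.rpow_natCast (1 + ‖p‖) (n + 1)
  rw [h1, ← div_eq_mul_inv, le_div_iff₀ (by positivity), mul_comm]
  refine le_trans ?_ (hD (τ • x + (1 - τ) • y, p))
  gcongr
  exact le_max_right _ _

lemma shubinKer_measurable (hbar : ℝ) {n : ℕ} (τ : ℝ)
    (a : SchwartzMap ((Fin n → ℝ) × (Fin n → ℝ)) ℂ) :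
    StronglyMeasurable (fun q : (Fin n → ℝ) × (Fin n → ℝ) => shubinKer hbar τ (⇑a) q.1 q.2) := by
  unfold shubinKer
  refine StronglyMeasurable.integral_prod_right'
    (f := fun r : ((Fin n → ℝ) × (Fin n → ℝ)) × (Fin n → ℝ) =>
      Complex.exp ((Complex.I / (hbar : ℂ)) * (dotR r.2 (r.1.1 - r.1.2) : ℝ)) *
      a (τ • r.1.1 + (1 - τ) • r.1.2, r.2)) ?_
  apply Continuous.stronglyMeasurable
  have ha := a.continuous
  unfold dotR
  fun_prop

/-- The formal adjoint of `Op_τ(a)` is `Op_{1−τ}(conj a)`: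
`⟨A_τψ, conj φ⟩ = ⟨ψ, conj (B_{1−τ}φ)⟩` where `B_{1−τ} = Op_{1−τ}(conj a)`. -/
theorem shubinOp_adjoint (hbar : ℝ) (hh : 0 < hbar) (n : ℕ) (hn : 1 ≤ n) (τ : ℝ)
    (a : SchwartzMap ((Fin n → ℝ) × (Fin n → ℝ)) ℂ)
    (ψ φ : SchwartzMap (Fin n → ℝ) ℂ) :
    ∫ x : Fin n → ℝ, ShubinOp hbar τ (⇑a) (⇑ψ) x * (starRingEnd ℂ) (φ x) =
      ∫ y : Fin n → ℝ,
        ψ y * (starRingEnd ℂ)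
          (ShubinOp hbar (1 - τ) (fun z => (starRingEnd ℂ) (a z)) (⇑φ) y) := by
  obtain ⟨C, hC⟩ := shubinKer_bound hbar τ a
  set c : ℂ := ((((2 * π * hbar) ^ n : ℝ))⁻¹ : ℂ) with hc
  have hcc : (starRingEnd ℂ) c = c := by
    rw [hc, map_inv₀, Complex.conj_ofReal]
  have hφ : Integrable (fun x => (starRingEnd ℂ) (φ x)) :=
    (LinearIsometryEquiv.integrable_comp_iff Complex.conjLIE).2 φ.integrable
  have hI : Integrable (fun q : (Fin n → ℝ) × (Fin n → ℝ) =>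
      shubinKer hbar τ (⇑a) q.1 q.2 * ((starRingEnd ℂ) (φ q.1) * ψ q.2))
      ((volume : Measure (Fin n → ℝ)).prod volume) :=
    (hφ.mul_prod ψ.integrable).bdd_mul
      (shubinKer_measurable hbar τ a).aestronglyMeasurable
      (Filter.Eventually.of_forall fun q => hC q.1 q.2)
  have hL : ∀ x, ShubinOp hbar τ (⇑a) (⇑ψ) x * (starRingEnd ℂ) (φ x) =
      c * ∫ y, shubinKer hbar τ (⇑a) x y * ((starRingEnd ℂ) (φ x) * ψ y) := by
    intro x
    change (c * ∫ y, shubinKer hbar τ (⇑a) x y * ψ y) * _ = _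
    rw [mul_assoc, ← integral_mul_const]
    congr 2
    ext y
    ring
  have hR : ∀ y, ψ y * (starRingEnd ℂ)
          (ShubinOp hbar (1 - τ) (fun z => (starRingEnd ℂ) (a z)) (⇑φ) y) =
      c * ∫ x, shubinKer hbar τ (⇑a) x y * ((starRingEnd ℂ) (φ x) * ψ y) := by
    intro y
    change _ * (starRingEnd ℂ) (c * ∫ x, shubinKer hbar (1 - τ)
      (fun z => (starRingEnd ℂ) (a z)) y x * φ x) = _
    rw [map_mul, hcc, ← integral_conj, mul_left_comm, ← integral_const_mul]
    congr 2
    ext x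
    rw [map_mul, conj_shubinKer]
    ring
  simp_rw [hL, hR]
  rw [integral_const_mul, integral_const_mul]
  congr 1
  exact integral_integral_swap hI


end
end

section
/- For every z₀ = (x₀,p₀) ∈ ℝ²ⁿ, every function ψ : ℝⁿ → ℂ and every x ∈ ℝⁿ, ∫₀¹ (T̂_τ(z₀)ψ)(x) dτ = Θ(x₀,p₀) · (T̂(z₀)ψ)(x); that is, the average of the modified Heisenberg–Weyl operators T̂_τ(z₀) over τ ∈ [0,1] equals Θ(z₀)·T̂(z₀). -/
open MeasureTheory Real Complex

noncomputable section

/-- Averaging the modified Heisenberg–Weyl operators over `τ ∈ [0,1]` yields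
`Θ(z₀)·T̂(z₀)` where `T̂(z₀) = T̂_{1/2}(z₀)`. -/
theorem average_THW_eq_theta (hbar : ℝ) (hh : 0 < hbar) (n : ℕ) (hn : 1 ≤ n)
    (z₀ : (Fin n → ℝ) × (Fin n → ℝ)) (ψ : (Fin n → ℝ) → ℂ) (x : Fin n → ℝ) :
    ∫ τ in (0:ℝ)..1, THW hbar τ z₀ ψ x =
      ((Theta hbar z₀.1 z₀.2 : ℝ) : ℂ) * THW hbar (1 / 2) z₀ ψ x := by
  unfold THW Theta
  generalize dotR z₀.2 x = a
  generalize dotR z₀.2 z₀.1 = d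
  generalize ψ (x - z₀.1) = w
  have hc : (hbar : ℂ) ≠ 0 := by exact_mod_cast hh.ne'
  rw [intervalIntegral.integral_mul_const]
  by_cases hd : d = 0
  · subst hd
    simp
  · have hdc : (d : ℂ) ≠ 0 := by exact_mod_cast hd
    have hk : Complex.I * d / hbar ≠ 0 :=
      div_ne_zero (mul_ne_zero Complex.I_ne_zero hdc) hc
    have h1 : ∀ τ : ℝ, Complex.exp ((Complex.I / (hbar : ℂ)) *
        ((a - (1 - τ) * d : ℝ) : ℂ)) =
        Complex.exp ((Complex.I / (hbar : ℂ)) * ((a - d : ℝ) : ℂ)) *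
          Complex.exp (Complex.I * d / hbar * (τ : ℂ)) := by
      intro τ
      rw [← Complex.exp_add]
      congr 1
      push_cast
      ring
    simp only [h1]
    rw [intervalIntegral.integral_const_mul, integral_exp_mul_complex hk, if_neg hd]
    have h2 : Complex.exp (Complex.I * d / hbar * ((1 : ℝ) : ℂ)) =
        Complex.exp (Complex.I * d / hbar * ((1 / 2 : ℝ) : ℂ)) *
        Complex.exp (Complex.I * d / hbar * ((1 / 2 : ℝ) : ℂ)) := by
      rw [← Complex.exp_add]
      congr 1
      push_cast
      ring
    have h3 : Complex.exp (Complex.I * d / hbar * ((1 / 2 : ℝ) : ℂ)) =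
        Complex.exp ((d : ℂ) / (2 * hbar) * Complex.I) := by
      congr 1
      push_cast
      ring
    have h4 : Complex.exp (-((d : ℂ) / (2 * hbar)) * Complex.I) *
        Complex.exp ((d : ℂ) / (2 * hbar) * Complex.I) = 1 := by
      rw [← Complex.exp_add]
      simp
    rw [h2, h3]
    push_cast
    rw [Complex.sin]
    generalize Complex.exp ((d : ℂ) / (2 * hbar) * Complex.I) = E at *
    generalize Complex.exp (-((d : ℂ) / (2 * hbar)) * Complex.I) = F at *
    generalize Complex.exp (Complex.I / (hbar : ℂ) * ((a : ℂ) - d)) = G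
    simp only [mul_zero, Complex.exp_zero]
    have hI := Complex.I_ne_zero
    have hII := Complex.I_sq
    have h5 : (E * E - 1) / (Complex.I * d / hbar) =
        (F - E) * Complex.I / 2 / (d / (2 * hbar)) * E := by
      field_simp
      linear_combination (E ^ 2 - E * F) * hII + h4
    rw [h5]
    ring


end
end

section
/- For all Schwartz functions ψ, φ : ℝⁿ → ℂ and every z = (x,p) ∈ ℝ²ⁿ, the symplectic Fourier transform of the Born–Jordan–Wigner distribution equals Θ times the cross-ambiguity function: F_σ(Wig_BJ(ψ,φ))(z) = Θ(x,p) · Amb(ψ,φ)(z). -/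
open MeasureTheory Real Complex

noncomputable section

set_option linter.unusedSectionVars false

lemma integrable_w {E : Type*} [NormedAddCommGroup E] [NormedSpace ℝ E] [FiniteDimensional ℝ E]
    [MeasurableSpace E] [BorelSpace E] (μ : Measure E)
    [μ.IsAddHaarMeasure] (M : ℕ) (hM : Module.finrank ℝ E < M) :
    Integrable (fun y : E => ((1 + ‖y‖) ^ M)⁻¹) μ := by
  have := integrable_one_add_norm (E := E) (μ := μ) (r := M) (by exact_mod_cast hM)
  refine this.congr (Filter.Eventually.of_forall fun y => ?_)
  simp only
  rw [Real.rpow_neg (by positivity), Real.rpow_natCast]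

section core
variable {E : Type*} [NormedAddCommGroup E] [InnerProductSpace ℝ E] [FiniteDimensional ℝ E]
  [MeasurableSpace E] [BorelSpace E]

/-- integrand -/
def FF (f g : SchwartzMap E ℂ) (τ : ℝ) (x y : E) : ℂ := f (x + τ • y) * g (x - (1 - τ) • y)

lemma FF_contDiff (f g : SchwartzMap E ℂ) (τ : ℝ) (x : E) :
    ContDiff ℝ ((⊤ : ℕ∞) : WithTop ℕ∞) (FF f g τ x) := by
  have hf := f.smooth ⊤
  have hg := g.smooth ⊤
  unfold FF
  fun_prop

lemma schwartz_dec (f : SchwartzMap E ℂ) (M j : ℕ) :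
    ∃ C, 0 ≤ C ∧ ∀ x, ‖iteratedFDeriv ℝ j f x‖ ≤ C * ((1 + ‖x‖) ^ M)⁻¹ := by
  refine ⟨2 ^ M * ((Finset.Iic (M, j)).sup fun m => SchwartzMap.seminorm ℝ m.1 m.2) f,
    by positivity, fun x => ?_⟩
  have h := SchwartzMap.one_add_le_sup_seminorm_apply (𝕜 := ℝ) (m := (M, j)) le_rfl le_rfl f x
  have hp : 0 < (1 + ‖x‖) ^ M := by positivity
  rw [← div_eq_mul_inv, le_div_iff₀ hp, mul_comm]
  exact h

lemma deriv_affine (f : SchwartzMap E ℂ) (c : ℝ) (hc : |c| ≤ 1) (x y : E) (j : ℕ) :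
    ‖iteratedFDeriv ℝ j (fun y => f (x + c • y)) y‖ ≤ ‖iteratedFDeriv ℝ j f (x + c • y)‖ := by
  have h1 : ContDiff ℝ j (fun z => f (x + z)) := by
    have := f.smooth j
    fun_prop
  have h := iteratedFDeriv_comp_const_smul (𝕜 := ℝ) (f := fun z => f (x + z)) c h1
  have h' := congrFun h y
  rw [h']
  simp only [iteratedFDeriv_comp_add_left, norm_smul, norm_pow, Real.norm_eq_abs]
  exact mul_le_of_le_one_left (norm_nonneg _) (pow_le_one₀ (abs_nonneg _) hc)

lemma weight (τ : ℝ) (h0 : 0 ≤ τ) (h1 : τ ≤ 1) (x y : E) (M : ℕ) :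
    ((1 + ‖x + τ • y‖) ^ (2 * M))⁻¹ * ((1 + ‖x - (1 - τ) • y‖) ^ (2 * M))⁻¹ ≤
      ((1 + ‖x‖) ^ M)⁻¹ * ((1 + ‖y‖) ^ M)⁻¹ := by
  set u := x + τ • y with hu
  set v := x - (1 - τ) • y with hv
  have hx : ‖x‖ ≤ ‖u‖ + ‖v‖ := by
    have : x = (1 - τ) • u + τ • v := by rw [hu, hv]; module
    rw [this]
    refine (norm_add_le _ _).trans ?_
    rw [norm_smul, norm_smul, Real.norm_of_nonneg h0, Real.norm_of_nonneg (by linarith)]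
    nlinarith [norm_nonneg u, norm_nonneg v]
  have hy : ‖y‖ ≤ ‖u‖ + ‖v‖ := by
    have : y = u - v := by rw [hu, hv]; module
    rw [this]
    exact norm_sub_le _ _
  have hu0 := norm_nonneg u
  have hv0 := norm_nonneg v
  have hx0 := norm_nonneg x
  have hy0 := norm_nonneg y
  rw [← mul_inv, ← mul_inv, ← mul_pow, ← mul_pow, pow_mul]
  apply inv_anti₀ (by positivity)
  gcongr
  have : 1 + ‖u‖ + ‖v‖ ≤ (1 + ‖u‖) * (1 + ‖v‖) := by nlinarith
  rw [sq]
  apply mul_le_mul <;> first | positivity | linarith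

lemma FF_dec (f g : SchwartzMap E ℂ) (M j : ℕ) :
    ∃ C, 0 ≤ C ∧ ∀ τ : ℝ, 0 ≤ τ → τ ≤ 1 → ∀ x y : E,
      ‖iteratedFDeriv ℝ j (FF f g τ x) y‖ ≤ C * (((1 + ‖x‖) ^ M)⁻¹ * ((1 + ‖y‖) ^ M)⁻¹) := by
  choose Cf hCf hf using schwartz_dec f (2 * M)
  choose Cg hCg hg using schwartz_dec g (2 * M)
  refine ⟨∑ i ∈ Finset.range (j + 1), (j.choose i : ℝ) * Cf i * Cg (j - i), 
    Finset.sum_nonneg fun i _ => by have := hCf i; have := hCg (j - i); positivity, ?_⟩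
  intro τ h0 h1 x y
  have e1 : ContDiff ℝ j (fun y => f (x + τ • y)) := by
    have := f.smooth j
    fun_prop
  have e2 : ContDiff ℝ j (fun y => g (x - (1 - τ) • y)) := by
    have := g.smooth j
    fun_prop
  refine (norm_iteratedFDeriv_mul_le e1 e2 y le_rfl).trans ?_
  rw [Finset.sum_mul]
  refine Finset.sum_le_sum fun i _ => ?_
  have a1 := (deriv_affine f τ (by rw [abs_le]; constructor <;> linarith) x y i).trans (hf i _)
  have a2 := (deriv_affine g (-(1 - τ)) (by rw [abs_le]; constructor <;> linarith) x y
    (j - i)).trans (hg (j - i) _)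
  simp only [neg_smul, ← sub_eq_add_neg] at a2
  have p1 := hCf i
  have p2 := hCg (j - i)
  calc _ ≤ (j.choose i : ℝ) * (Cf i * ((1 + ‖x + τ • y‖) ^ (2 * M))⁻¹) *
        (Cg (j - i) * ((1 + ‖x - (1 - τ) • y‖) ^ (2 * M))⁻¹) := by gcongr
    _ = ((j.choose i : ℝ) * Cf i * Cg (j - i)) * (((1 + ‖x + τ • y‖) ^ (2 * M))⁻¹ *
        ((1 + ‖x - (1 - τ) • y‖) ^ (2 * M))⁻¹) := by ring
    _ ≤ _ := by
      exact mul_le_mul_of_nonneg_left (weight τ h0 h1 x y M) (by positivity)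

lemma FF_int (f g : SchwartzMap E ℂ) (j : ℕ) (τ : ℝ) (h0 : 0 ≤ τ) (h1 : τ ≤ 1) (x : E) :
    Integrable (fun y => ‖iteratedFDeriv ℝ j (FF f g τ x) y‖) := by
  obtain ⟨C, hC, h⟩ := FF_dec f g (Module.finrank ℝ E + 1) j
  refine Integrable.mono' ((integrable_w (E := E) volume _ (Nat.lt_succ_self _)).const_mul
    (C * ((1 + ‖x‖) ^ (Module.finrank ℝ E + 1))⁻¹)) ?_ (Filter.Eventually.of_forall fun y => ?_)
  · exact ((FF_contDiff f g τ x).continuous_iteratedFDeriv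
      (by exact_mod_cast le_top)).norm.aestronglyMeasurable
  · rw [norm_norm, mul_assoc]
    exact h τ h0 h1 x y

open FourierTransform in
lemma fourier_dec0 (f g : SchwartzMap E ℂ) (M N : ℕ) :
    ∃ C, 0 ≤ C ∧ ∀ τ : ℝ, 0 ≤ τ → τ ≤ 1 → ∀ x w : E,
      ‖w‖ ^ N * ‖𝓕 (FF f g τ x) w‖ ≤ C * ((1 + ‖x‖) ^ M)⁻¹ := by
  choose C hC h using FF_dec f g (M + (Module.finrank ℝ E + 1))
  set I := ∫ y : E, ((1 + ‖y‖) ^ (M + (Module.finrank ℝ E + 1)))⁻¹ with hI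
  have hI0 : 0 ≤ I := integral_nonneg fun y => by positivity
  refine ⟨2 ^ N * ∑ j ∈ Finset.range (N + 1), C j * I, mul_nonneg (by positivity)
    (Finset.sum_nonneg fun i _ => mul_nonneg (hC i) hI0), ?_⟩
  intro τ h0 h1 x w
  have key := Real.pow_mul_norm_iteratedFDeriv_fourier_le (f := FF f g τ x) (K := 0) (N := ⊤)
    (FF_contDiff f g τ x) (by
      intro k n hk _
      have : k = 0 := by exact_mod_cast nonpos_iff_eq_zero.mp hk
      subst this
      simpa using FF_int f g n τ h0 h1 x) (k := 0) (n := N) (by simp) (by simp) w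
  simp only [norm_iteratedFDeriv_zero, pow_zero, one_mul, Nat.cast_zero, mul_zero, zero_add,
    Finset.range_one, Finset.singleton_product, Finset.sum_map] at key
  refine key.trans ?_
  rw [mul_assoc, Finset.sum_mul]
  refine mul_le_mul_of_nonneg_left (Finset.sum_le_sum fun j _ => ?_) (by positivity)
  simp only [Function.Embedding.coeFn_mk, pow_zero, one_mul]
  calc _ ≤ ∫ y : E, C j * (((1 + ‖x‖) ^ M)⁻¹ * ((1 + ‖y‖) ^ (M + (Module.finrank ℝ E + 1)))⁻¹) := by
        refine integral_mono (FF_int f g j τ h0 h1 x) ?_ fun y => ?_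
        · exact ((integrable_w (E := E) volume _ (by omega)).const_mul _).const_mul _
        · refine (h j τ h0 h1 x y).trans ?_
          have := hC j
          gcongr
          · linarith [norm_nonneg x]
          · omega
    _ = _ := by rw [integral_const_mul, integral_const_mul]; ring

open FourierTransform in
lemma fourier_dec (f g : SchwartzMap E ℂ) (M : ℕ) :
    ∃ C, 0 ≤ C ∧ ∀ τ : ℝ, 0 ≤ τ → τ ≤ 1 → ∀ x w : E,
      ‖𝓕 (FF f g τ x) w‖ ≤ C * (((1 + ‖x‖) ^ M)⁻¹ * ((1 + ‖w‖) ^ M)⁻¹) := by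
  obtain ⟨C0, hC0, h0⟩ := fourier_dec0 f g M 0
  obtain ⟨C1, hC1, h1⟩ := fourier_dec0 f g M M
  refine ⟨2 ^ M * (C0 + C1), by positivity, fun τ t0 t1 x w => ?_⟩
  have b0 := h0 τ t0 t1 x w
  have b1 := h1 τ t0 t1 x w
  have hp : 0 < (1 + ‖w‖) ^ M := by positivity
  rw [← mul_assoc, ← div_eq_mul_inv (b := (1 + ‖w‖) ^ M), le_div_iff₀ hp]
  have : (1 + ‖w‖) ^ M ≤ 2 ^ M * (1 + ‖w‖ ^ M) := by
    have hm : 1 + ‖w‖ ≤ 2 * max 1 ‖w‖ := by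
      linarith [le_max_left 1 ‖w‖, le_max_right 1 ‖w‖]
    calc (1 + ‖w‖) ^ M ≤ (2 * max 1 ‖w‖) ^ M := by gcongr
      _ = 2 ^ M * (max 1 ‖w‖) ^ M := by rw [mul_pow]
      _ ≤ _ := by
        gcongr
        rcases max_cases 1 ‖w‖ with h | h <;> rw [h.1]
        · simp
        · linarith
  calc _ ≤ ‖𝓕 (FF f g τ x) w‖ * (2 ^ M * (1 + ‖w‖ ^ M)) := by gcongr
    _ = 2 ^ M * (‖w‖ ^ 0 * ‖𝓕 (FF f g τ x) w‖ + ‖w‖ ^ M * ‖𝓕 (FF f g τ x) w‖) := by ring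
    _ ≤ 2 ^ M * (C0 * ((1 + ‖x‖) ^ M)⁻¹ + C1 * ((1 + ‖x‖) ^ M)⁻¹) := by gcongr
    _ = _ := by ring

open FourierTransform in
lemma FF_inversion (f g : SchwartzMap E ℂ) (τ : ℝ) (h0 : 0 ≤ τ) (h1 : τ ≤ 1) (x y : E) :
    ∫ w : E, Complex.exp (↑(2 * π * inner ℝ w y) * Complex.I) * 𝓕 (FF f g τ x) w =
      FF f g τ x y := by
  have hc := (FF_contDiff f g τ x).continuous
  have hi : Integrable (FF f g τ x) := by
    have := FF_int f g 0 τ h0 h1 x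
    simp only [norm_iteratedFDeriv_zero] at this
    exact (integrable_norm_iff hc.aestronglyMeasurable).1 this
  have hF : Integrable (𝓕 (FF f g τ x)) := by
    obtain ⟨C, hC, h⟩ := fourier_dec f g (Module.finrank ℝ E + 1)
    refine Integrable.mono' ((integrable_w (E := E) volume _ (Nat.lt_succ_self _)).const_mul
      (C * ((1 + ‖x‖) ^ (Module.finrank ℝ E + 1))⁻¹)) ?_ (Filter.Eventually.of_forall fun y => ?_)
    · exact (VectorFourier.fourierIntegral_continuous Real.continuous_fourierChar
        (by exact continuous_inner) hi).aestronglyMeasurable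
    · rw [mul_assoc]
      exact h τ h0 h1 x y
  have := congrFun (hc.fourierInv_fourier_eq hi hF) y
  rw [Real.fourierInv_eq'] at this
  simpa only [smul_eq_mul] using this
end core

section main
open FourierTransform
variable {n : ℕ}

/-- transport to Euclidean space -/
def liftS (ψ : SchwartzMap (Fin n → ℝ) ℂ) : SchwartzMap (EuclideanSpace ℝ (Fin n)) ℂ :=
  SchwartzMap.compCLMOfContinuousLinearEquiv ℝ (EuclideanSpace.equiv (Fin n) ℝ) ψ

lemma liftS_apply (ψ : SchwartzMap (Fin n → ℝ) ℂ) (y) : liftS ψ y = ψ (WithLp.ofLp y) := rfl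

/-- complex conjugate -/
def conjS (ψ : SchwartzMap (EuclideanSpace ℝ (Fin n)) ℂ) :
    SchwartzMap (EuclideanSpace ℝ (Fin n)) ℂ :=
  SchwartzMap.postcompCLM (𝕜 := ℝ) (Complex.conjCLE : ℂ →L[ℝ] ℂ) ψ

lemma conjS_apply (ψ : SchwartzMap (EuclideanSpace ℝ (Fin n)) ℂ) (y) :
    conjS ψ y = (starRingEnd ℂ) (ψ y) := rfl

lemma integral_lift (h : (Fin n → ℝ) → ℂ) :
    ∫ y, h y = ∫ y : EuclideanSpace ℝ (Fin n), h (WithLp.ofLp y) :=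
  ((PiLp.volume_preserving_ofLp (Fin n)).integral_comp
    (MeasurableEquiv.toLp 2 (Fin n → ℝ)).symm.measurableEmbedding h).symm

lemma inner_dotR (x y : EuclideanSpace ℝ (Fin n)) :
    inner ℝ x y = dotR (WithLp.ofLp y) (WithLp.ofLp x) := by
  simp [dotR, PiLp.inner_apply]

lemma dotR_smul_left (c : ℝ) (x y : Fin n → ℝ) : dotR (c • x) y = c * dotR x y := by
  simp [dotR, Finset.mul_sum, mul_assoc]

lemma dotR_smul_right (c : ℝ) (x y : Fin n → ℝ) : dotR x (c • y) = c * dotR x y := by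
  simp only [dotR, Finset.mul_sum, Pi.smul_apply, smul_eq_mul]
  exact Finset.sum_congr rfl fun i _ => by ring

lemma dotR_sub_right (x y z : Fin n → ℝ) : dotR x (y - z) = dotR x y - dotR x z := by
  simp [dotR, mul_sub]

lemma dotR_comm (x y : Fin n → ℝ) : dotR x y = dotR y x := by
  simp [dotR, mul_comm]

lemma dotR_cont : Continuous (fun z : (Fin n → ℝ) × (Fin n → ℝ) => dotR z.1 z.2) := by
  unfold dotR
  fun_prop

lemma dotR_cont' {X : Type*} [TopologicalSpace X] {a b : X → Fin n → ℝ} (ha : Continuous a)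
    (hb : Continuous b) : Continuous (fun z => dotR (a z) (b z)) :=
  dotR_cont.comp (ha.prodMk hb)

lemma wig_eq (hbar : ℝ) (hh : 0 < hbar) (ψ φ : SchwartzMap (Fin n → ℝ) ℂ) (τ : ℝ)
    (x p : Fin n → ℝ) :
    WigTau hbar τ ψ φ x p = ((((2 * π * hbar) ^ n : ℝ))⁻¹ : ℂ) *
      𝓕 (FF (liftS ψ) (conjS (liftS φ)) τ (WithLp.toLp 2 x))
        ((2 * π * hbar)⁻¹ • WithLp.toLp 2 p) := by
  rw [WigTau, integral_lift, Real.fourier_eq']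
  congr 1
  refine integral_congr_ae (Filter.Eventually.of_forall fun y => ?_)
  simp only [smul_eq_mul, FF, liftS_apply, conjS_apply, inner_dotR, WithLp.ofLp_add,
    WithLp.ofLp_sub, WithLp.ofLp_smul, mul_assoc, dotR_smul_left]
  congr 2
  have : (hbar : ℂ) ≠ 0 := by exact_mod_cast hh.ne'
  have : (π : ℂ) ≠ 0 := by exact_mod_cast Real.pi_ne_zero
  push_cast
  field_simp

lemma norm_phase (hbar t : ℝ) : ‖Complex.exp (-(Complex.I / (hbar : ℂ)) * (t : ℂ))‖ = 1 := by
  have : -(Complex.I / (hbar : ℂ)) * (t : ℂ) = ((-(t / hbar) : ℝ) : ℂ) * Complex.I := by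
    push_cast; ring
  rw [this, Complex.norm_exp_ofReal_mul_I]

lemma wig_meas (hbar : ℝ) (ψ φ : SchwartzMap (Fin n → ℝ) ℂ) :
    StronglyMeasurable (fun q : ℝ × ((Fin n → ℝ) × (Fin n → ℝ)) =>
      WigTau hbar q.1 ψ φ q.2.1 q.2.2) := by
  unfold WigTau
  refine StronglyMeasurable.const_mul ?_ _
  refine StronglyMeasurable.integral_prod_right (f := fun (q : (ℝ × ((Fin n → ℝ) × (Fin n → ℝ)))) (y : Fin n → ℝ) => Complex.exp (-(Complex.I / (hbar : ℂ)) * (dotR q.2.2 y : ℝ)) *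
        ψ (q.2.1 + q.1 • y) * (starRingEnd ℂ) (φ (q.2.1 - (1 - q.1) • y))) ?_
  apply Continuous.stronglyMeasurable
  have h1 := ψ.continuous
  have h2 := φ.continuous
  have h3 : Continuous fun z : (ℝ × ((Fin n → ℝ) × (Fin n → ℝ))) × (Fin n → ℝ) =>
    dotR z.1.2.2 z.2 := dotR_cont' (by fun_prop) (by fun_prop)
  have h4 := Complex.continuous_conj
  unfold Function.uncurry
  fun_prop

lemma wig_int (hbar : ℝ) (hh : 0 < hbar) (ψ φ : SchwartzMap (Fin n → ℝ) ℂ) (x p : Fin n → ℝ) :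
    Integrable (Function.uncurry fun (τ : ℝ) (z' : (Fin n → ℝ) × (Fin n → ℝ)) =>
      Complex.exp (-(Complex.I / (hbar : ℂ)) * ((dotR p z'.1 - dotR z'.2 x : ℝ) : ℂ)) *
        WigTau hbar τ ψ φ z'.1 z'.2)
      ((volume.restrict (Set.uIoc (0:ℝ) 1)).prod volume) := by
  set M := Module.finrank ℝ (EuclideanSpace ℝ (Fin n)) + 1 with hM
  obtain ⟨C, hC, h⟩ := fourier_dec (liftS ψ) (conjS (liftS φ)) M
  have hw := integrable_w (E := EuclideanSpace ℝ (Fin n)) volume M (Nat.lt_succ_self _)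
  have hb : (2 * π * hbar)⁻¹ ≠ 0 := by positivity
  have hw2 := hw.comp_smul hb
  have emb := (MeasurableEquiv.toLp 2 (Fin n → ℝ)).measurableEmbedding
  have k1 := ((PiLp.volume_preserving_toLp (Fin n)).integrable_comp_emb emb).2 hw
  have k2 := ((PiLp.volume_preserving_toLp (Fin n)).integrable_comp_emb emb).2 hw2
  haveI : IsFiniteMeasure (volume.restrict (Set.uIoc (0:ℝ) 1)) := by
    rw [Set.uIoc_of_le zero_le_one]; infer_instance
  have k3 := ((k1.mul_prod k2).const_mul (|((2 * π * hbar) ^ n)⁻¹| * C)).comp_snd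
    (volume.restrict (Set.uIoc (0:ℝ) 1))
  refine Integrable.mono' k3 ?_ ?_
  · refine (StronglyMeasurable.mul ?_ (wig_meas hbar ψ φ)).aestronglyMeasurable
    apply Continuous.stronglyMeasurable
    have h3 : Continuous fun z : ℝ × ((Fin n → ℝ) × (Fin n → ℝ)) => dotR p z.2.1 :=
      dotR_cont' (by fun_prop) (by fun_prop)
    have h4 : Continuous fun z : ℝ × ((Fin n → ℝ) × (Fin n → ℝ)) => dotR z.2.2 x :=
      dotR_cont' (by fun_prop) (by fun_prop)
    fun_prop
  · have hτ : ∀ᵐ τ ∂(volume.restrict (Set.uIoc (0:ℝ) 1)), 0 ≤ τ ∧ τ ≤ 1 := by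
      filter_upwards [ae_restrict_mem measurableSet_uIoc] with τ ht
      rw [Set.uIoc_of_le zero_le_one] at ht
      exact ⟨ht.1.le, ht.2⟩
    filter_upwards [Measure.quasiMeasurePreserving_fst.ae hτ] with q hq
    simp only [Function.uncurry, norm_mul, norm_phase, one_mul, wig_eq hbar hh]
    have e : ‖((((2 * π * hbar) ^ n : ℝ))⁻¹ : ℂ)‖ = |((2 * π * hbar) ^ n)⁻¹| := by
      rw [← Complex.ofReal_inv, Complex.norm_real, Real.norm_eq_abs]
    rw [e]
    refine le_trans ?_ (le_of_eq (mul_assoc _ _ _).symm)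
    exact mul_le_mul_of_nonneg_left (h q.1 hq.1 hq.2 _ _) (abs_nonneg _)

lemma inner_step (hbar : ℝ) (hh : 0 < hbar) (ψ φ : SchwartzMap (Fin n → ℝ) ℂ)
    (x p x' : Fin n → ℝ) (τ : ℝ) (h0 : 0 ≤ τ) (h1 : τ ≤ 1) :
    ∫ p' : Fin n → ℝ,
      Complex.exp (-(Complex.I / (hbar : ℂ)) * ((dotR p x' - dotR p' x : ℝ) : ℂ)) *
        WigTau hbar τ ψ φ x' p' =
      Complex.exp (-(Complex.I / (hbar : ℂ)) * (dotR p x' : ℝ)) *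
        (ψ (x' + τ • x) * (starRingEnd ℂ) (φ (x' - (1 - τ) • x))) := by
  have hb : 0 < 2 * π * hbar := by positivity
  have hbn : (((2 * π * hbar) ^ n : ℝ) : ℂ) ≠ 0 := by
    exact_mod_cast (pow_pos hb n).ne'
  have key := FF_inversion (liftS ψ) (conjS (liftS φ)) τ h0 h1 (WithLp.toLp 2 x')
    (WithLp.toLp 2 x)
  have e2 : FF (liftS ψ) (conjS (liftS φ)) τ (WithLp.toLp 2 x') (WithLp.toLp 2 x) =
      ψ (x' + τ • x) * (starRingEnd ℂ) (φ (x' - (1 - τ) • x)) := rfl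
  rw [← e2, ← key, integral_lift]
  have sc := Measure.integral_comp_inv_smul (volume : Measure (EuclideanSpace ℝ (Fin n)))
    (fun w => Complex.exp (↑(2 * π * inner ℝ w (WithLp.toLp 2 x)) * Complex.I) *
      𝓕 (FF (liftS ψ) (conjS (liftS φ)) τ (WithLp.toLp 2 x')) w) (2 * π * hbar)
  rw [finrank_euclideanSpace_fin, abs_of_pos (pow_pos hb n), Complex.real_smul] at sc
  rw [← inv_mul_eq_iff_eq_mul₀ hbn] at sc
  rw [← sc, ← mul_assoc, ← integral_const_mul]
  refine integral_congr_ae (Filter.Eventually.of_forall fun w => ?_)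
  simp only [wig_eq hbar hh, WithLp.toLp_ofLp]
  have : Complex.exp (-(Complex.I / (hbar : ℂ)) * ((dotR p x' - dotR (WithLp.ofLp w) x : ℝ) : ℂ))
      = Complex.exp (-(Complex.I / (hbar : ℂ)) * (dotR p x' : ℝ)) *
        Complex.exp (↑(2 * π * inner ℝ ((2 * π * hbar)⁻¹ • w) (WithLp.toLp 2 x)) * Complex.I) := by
    rw [← Complex.exp_add]
    congr 1
    rw [inner_dotR, WithLp.ofLp_smul, dotR_smul_right, dotR_comm (WithLp.ofLp w) x]
    have : (hbar : ℂ) ≠ 0 := by exact_mod_cast hh.ne'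
    have : (π : ℂ) ≠ 0 := by exact_mod_cast Real.pi_ne_zero
    push_cast
    field_simp
    ring
  rw [this]
  push_cast
  ring

lemma shift_step (hbar : ℝ) (ψ φ : SchwartzMap (Fin n → ℝ) ℂ) (x p : Fin n → ℝ) (τ : ℝ) :
    ∫ x' : Fin n → ℝ, Complex.exp (-(Complex.I / (hbar : ℂ)) * (dotR p x' : ℝ)) *
        (ψ (x' + τ • x) * (starRingEnd ℂ) (φ (x' - (1 - τ) • x))) =
    Complex.exp ((Complex.I / (hbar : ℂ)) * (((τ - 1 / 2) * dotR p x : ℝ) : ℂ)) *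
    ∫ x' : Fin n → ℝ,
      Complex.exp (-(Complex.I / (hbar : ℂ)) * (dotR p x' : ℝ)) *
        ψ (x' + (1 / 2 : ℝ) • x) * (starRingEnd ℂ) (φ (x' - (1 / 2 : ℝ) • x)) := by
  rw [← integral_sub_right_eq_self _ ((τ - 1 / 2) • x), ← integral_const_mul]
  refine integral_congr_ae (Filter.Eventually.of_forall fun y => ?_)
  simp only
  have a1 : y - (τ - 1 / 2) • x + τ • x = y + (1 / 2 : ℝ) • x := by module
  have a2 : y - (τ - 1 / 2) • x - (1 - τ) • x = y - (1 / 2 : ℝ) • x := by module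
  rw [a1, a2, dotR_sub_right, dotR_smul_right, ← mul_assoc, ← mul_assoc, ← mul_assoc,
    ← Complex.exp_add]
  congr 3
  push_cast
  ring

lemma theta_step (hbar : ℝ) (hh : 0 < hbar) (x p : Fin n → ℝ) :
    ∫ τ in (0:ℝ)..1,
      Complex.exp ((Complex.I / (hbar : ℂ)) * (((τ - 1 / 2) * dotR p x : ℝ) : ℂ)) =
      ((Theta hbar x p : ℝ) : ℂ) := by
  unfold Theta
  split_ifs with hd
  · simp [hd]
  · set d := dotR p x with hdd
    have hb : (hbar : ℂ) ≠ 0 := by exact_mod_cast hh.ne'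
    have hdc : (d : ℂ) ≠ 0 := by exact_mod_cast hd
    set c : ℂ := Complex.I / hbar * d with hc
    have hc0 : c ≠ 0 := by
      rw [hc]
      exact mul_ne_zero (div_ne_zero Complex.I_ne_zero hb) hdc
    have e : ∀ τ : ℝ, Complex.exp ((Complex.I / (hbar : ℂ)) * (((τ - 1 / 2) * d : ℝ) : ℂ)) =
        Complex.exp (-c / 2) * Complex.exp (c * τ) := by
      intro τ
      rw [← Complex.exp_add, hc]
      congr 1
      push_cast
      ring
    simp only [e]
    rw [intervalIntegral.integral_const_mul, integral_exp_mul_complex hc0]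
    push_cast
    rw [Complex.sin]
    have f1 : -((d : ℂ) / (2 * hbar)) * Complex.I = -c / 2 := by rw [hc]; field_simp
    have f2 : ((d : ℂ) / (2 * hbar)) * Complex.I = c / 2 := by rw [hc]; field_simp
    rw [f1, f2, mul_zero, mul_one, Complex.exp_zero]
    have f3 : Complex.exp c = Complex.exp (c / 2) * Complex.exp (c / 2) := by
      rw [← Complex.exp_add]; congr 1; ring
    have f4 : Complex.exp (-c / 2) * Complex.exp (c / 2) = 1 := by
      rw [← Complex.exp_add, ← Complex.exp_zero]; congr 1; ring
    have f5 : Complex.exp (-c / 2) * (Complex.exp c - 1) =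
        Complex.exp (c / 2) - Complex.exp (-c / 2) := by
      rw [f3]
      linear_combination (Complex.exp (c / 2)) * f4
    rw [← mul_div_assoc, f5]
    have f6 : ∀ A B : ℂ, (A - B) / c = (B - A) * Complex.I / 2 / ((d : ℂ) / (2 * hbar)) := by
      intro A B
      rw [div_eq_iff hc0, hc]
      field_simp
      linear_combination (A - B) * Complex.I_sq
    exact f6 _ _

end main

/-- The symplectic Fourier transform of the Born–Jordan–Wigner distribution is
`Θ` times the cross-ambiguity function: `F_σ(Wig_BJ(ψ,φ))(z) = Θ(z)·Amb(ψ,φ)(z)`. -/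
theorem symplFT_wigBJ (hbar : ℝ) (hh : 0 < hbar) (n : ℕ) (hn : 1 ≤ n)
    (ψ φ : SchwartzMap (Fin n → ℝ) ℂ) (x p : Fin n → ℝ) :
    symplFT hbar (fun z => WigBJ hbar (⇑ψ) (⇑φ) z.1 z.2) (x, p) =
      ((Theta hbar x p : ℝ) : ℂ) * Amb hbar (⇑ψ) (⇑φ) x p := by
  have hI := wig_int hbar hh ψ φ x p
  have e1 : ∀ z' : (Fin n → ℝ) × (Fin n → ℝ),
      Complex.exp (-(Complex.I / (hbar : ℂ)) * ((dotR p z'.1 - dotR z'.2 x : ℝ) : ℂ)) *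
        WigBJ hbar (⇑ψ) (⇑φ) z'.1 z'.2 = ∫ τ in (0:ℝ)..1,
      Complex.exp (-(Complex.I / (hbar : ℂ)) * ((dotR p z'.1 - dotR z'.2 x : ℝ) : ℂ)) *
        WigTau hbar τ ψ φ z'.1 z'.2 := by
    intro z'
    rw [WigBJ, intervalIntegral.integral_const_mul]
  unfold symplFT Amb
  simp only [e1]
  rw [← intervalIntegral_integral_swap hI, mul_left_comm]
  congr 1
  rw [← theta_step hbar hh, ← intervalIntegral.integral_mul_const]
  refine intervalIntegral.integral_congr_ae ?_
  have hae := hI.prod_right_ae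
  rw [ae_restrict_iff' measurableSet_uIoc] at hae
  filter_upwards [hae] with τ hτ hm
  have hi : Integrable (fun z' : (Fin n → ℝ) × (Fin n → ℝ) =>
      Complex.exp (-(Complex.I / (hbar : ℂ)) * ((dotR p z'.1 - dotR z'.2 x : ℝ) : ℂ)) *
        WigTau hbar τ ψ φ z'.1 z'.2) (volume.prod volume) := hτ hm
  rw [Set.uIoc_of_le zero_le_one] at hm
  rw [← shift_step, Measure.volume_eq_prod, integral_prod _ hi]
  refine integral_congr_ae (Filter.Eventually.of_forall fun x' => ?_)
  exact inner_step hbar hh ψ φ x p x' τ hm.1.le hm.2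

end
end

section
/- For every real τ, all Schwartz functions ψ, φ : ℝⁿ → ℂ and every z = (x,p) ∈ ℝ²ⁿ, the symplectic Fourier transform of the τ-Wigner distribution is the phase-modulated ambiguity function: F_σ(Wig_τ(ψ,φ))(z) = e^((i/(2ħ))(2τ−1) p·x) · Amb(ψ,φ)(z). In particular, for τ = 1/2, F_σ(Wig(ψ,φ)) = Amb(ψ,φ). -/
open MeasureTheory Real Complex

noncomputable section

open scoped FourierTransform SchwartzMap ContDiff

section aux

variable {E E' G : Type*} [NormedAddCommGroup E] [NormedSpace ℝ E]
  [NormedAddCommGroup E'] [NormedSpace ℝ E'] [NormedAddCommGroup G] [NormedSpace ℝ G]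

lemma aux_decay (f : 𝓢(E, G)) (k l : ℕ) :
    ∃ C : ℝ, 0 ≤ C ∧ ∀ x, (1 + ‖x‖) ^ k * ‖iteratedFDeriv ℝ l f x‖ ≤ C := by
  have h := SchwartzMap.one_add_le_sup_seminorm_apply (𝕜 := ℝ) (m := (k, l)) le_rfl le_rfl f
  refine ⟨_, ?_, h⟩
  exact le_trans (by positivity) (h 0)

lemma aux_comp_bound (f : 𝓢(E, G)) (g : E' →L[ℝ] E) (l : ℕ) (a : E) (x : E') :
    ‖iteratedFDeriv ℝ l (fun y => f (a + g y)) x‖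
      ≤ ‖iteratedFDeriv ℝ l f (a + g x)‖ * ‖g‖ ^ l := by
  have h1 : ContDiff ℝ ∞ (fun e => f (a + e)) :=
    (f.smooth ⊤).comp (contDiff_const.add contDiff_id)
  have h2 := g.iteratedFDeriv_comp_right h1 x (i := l) (by exact_mod_cast le_top)
  have h3 : (fun y => f (a + g y)) = (fun e => f (a + e)) ∘ g := rfl
  rw [h3, h2, iteratedFDeriv_comp_add_left]
  refine (ContinuousMultilinearMap.norm_compContinuousLinearMap_le _ _).trans ?_
  simp

/-- tensor product of Schwartz functions -/
def auxTensor (f : 𝓢(E, ℂ)) (g : 𝓢(E', ℂ)) : 𝓢(E × E', ℂ) where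
  toFun z := f z.1 * g z.2
  smooth' := ((f.smooth ⊤).comp contDiff_fst).mul ((g.smooth ⊤).comp contDiff_snd)
  decay' := by
    intro k l
    choose C hC0 hC using fun i => aux_decay f k i
    choose D hD0 hD using fun i => aux_decay g k i
    refine ⟨∑ i ∈ Finset.range (l + 1), (l.choose i : ℝ) * C i * D (l - i), ?_⟩
    rintro ⟨a, b⟩
    have hf : ContDiff ℝ ∞ (fun z : E × E' => f z.1) := (f.smooth ⊤).comp contDiff_fst
    have hg : ContDiff ℝ ∞ (fun z : E × E' => g z.2) := (g.smooth ⊤).comp contDiff_snd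
    refine (mul_le_mul_of_nonneg_left (norm_iteratedFDeriv_mul_le hf hg (a, b) (n := l)
      (by exact_mod_cast le_top)) (by positivity)).trans ?_
    rw [Finset.mul_sum]
    refine Finset.sum_le_sum fun i _ => ?_
    have h1 : ‖iteratedFDeriv ℝ i (fun z : E × E' => f z.1) (a, b)‖
        ≤ ‖iteratedFDeriv ℝ i f a‖ := by
      have := aux_comp_bound f (ContinuousLinearMap.fst ℝ E E') i 0 (a, b)
      simp only [ContinuousLinearMap.coe_fst', zero_add] at this
      refine this.trans (mul_le_of_le_one_right (norm_nonneg _)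
        (pow_le_one₀ (norm_nonneg _) (ContinuousLinearMap.norm_fst_le ..)))
    have h2 : ‖iteratedFDeriv ℝ (l - i) (fun z : E × E' => g z.2) (a, b)‖
        ≤ ‖iteratedFDeriv ℝ (l - i) g b‖ := by
      have := aux_comp_bound g (ContinuousLinearMap.snd ℝ E E') (l - i) 0 (a, b)
      simp only [ContinuousLinearMap.coe_snd', zero_add] at this
      refine this.trans (mul_le_of_le_one_right (norm_nonneg _)
        (pow_le_one₀ (norm_nonneg _) (ContinuousLinearMap.norm_snd_le ..)))
    have h3 : ‖(a, b)‖ ^ k ≤ (1 + ‖a‖) ^ k * (1 + ‖b‖) ^ k := by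
      rw [← mul_pow]
      refine pow_le_pow_left₀ (norm_nonneg _) ?_ k
      rw [Prod.norm_mk]
      have := norm_nonneg a
      have := norm_nonneg b
      refine max_le ?_ ?_ <;> nlinarith [mul_nonneg (norm_nonneg a) (norm_nonneg b)]
    calc ‖(a, b)‖ ^ k * ((l.choose i : ℝ) * ‖iteratedFDeriv ℝ i (fun z : E × E' => f z.1) (a, b)‖
          * ‖iteratedFDeriv ℝ (l - i) (fun z : E × E' => g z.2) (a, b)‖)
        ≤ ((1 + ‖a‖) ^ k * (1 + ‖b‖) ^ k) * ((l.choose i : ℝ) * ‖iteratedFDeriv ℝ i f a‖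
          * ‖iteratedFDeriv ℝ (l - i) g b‖) := by gcongr
      _ = (l.choose i : ℝ) * ((1 + ‖a‖) ^ k * ‖iteratedFDeriv ℝ i f a‖) *
          ((1 + ‖b‖) ^ k * ‖iteratedFDeriv ℝ (l - i) g b‖) := by ring
      _ ≤ (l.choose i : ℝ) * C i * D (l - i) := by
          gcongr
          · exact mul_nonneg (by positivity) (hC0 i)
          · exact hC i a
          · exact hD _ b

lemma aux_slice_bound (H : 𝓢(E × E', G)) (N k l : ℕ) :
    ∃ C : ℝ, 0 ≤ C ∧ ∀ x y, (1 + ‖x‖) ^ N * (‖y‖ ^ k *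
      ‖iteratedFDeriv ℝ l (fun v => H (x, v)) y‖) ≤ C := by
  obtain ⟨C, hC0, hC⟩ := aux_decay H (N + k) l
  refine ⟨C, hC0, fun x y => ?_⟩
  have h := aux_comp_bound H (ContinuousLinearMap.inr ℝ E E') l (x, 0) y
  simp only [ContinuousLinearMap.inr_apply, Prod.mk_add_mk, add_zero, zero_add] at h
  have h' : ‖iteratedFDeriv ℝ l (fun v => H (x, v)) y‖ ≤ ‖iteratedFDeriv ℝ l H (x, y)‖ :=
    h.trans (mul_le_of_le_one_right (norm_nonneg _)
        (pow_le_one₀ (norm_nonneg _) (ContinuousLinearMap.norm_inr_le_one ..)))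
  refine le_trans ?_ (hC (x, y))
  rw [pow_add, mul_assoc]
  have h1 : ‖x‖ ≤ ‖(x, y)‖ := le_max_left _ _
  have h2 : ‖y‖ ≤ 1 + ‖(x, y)‖ := by
    have : ‖y‖ ≤ ‖(x, y)‖ := le_max_right _ _
    linarith
  gcongr

/-- slice of a Schwartz function -/
def auxSlice (H : 𝓢(E × E', G)) (x : E) : 𝓢(E', G) where
  toFun y := H (x, y)
  smooth' := (H.smooth ⊤).comp (contDiff_const.prodMk contDiff_id)
  decay' := by
    intro k l
    obtain ⟨C, -, hC⟩ := aux_slice_bound H 0 k l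
    exact ⟨C, fun y => by simpa using hC x y⟩

end aux

section aux2

variable {E V : Type*} [NormedAddCommGroup E] [NormedSpace ℝ E]
  [NormedAddCommGroup V] [InnerProductSpace ℝ V] [FiniteDimensional ℝ V]
  [MeasurableSpace V] [BorelSpace V]

lemma aux_fourier_bound0 (H : 𝓢(E × V, ℂ)) (N k : ℕ) :
    ∃ C : ℝ, ∀ x w, (1 + ‖x‖) ^ N * (‖w‖ ^ k * ‖𝓕 (fun y => H (x, y)) w‖) ≤ C := by
  let F : E → 𝓢(V, ℂ) := fun x => (((1 + ‖x‖) ^ N : ℝ) : ℂ) • auxSlice H x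
  have hb : Bornology.IsVonNBounded ℂ (F '' Set.univ) := by
    rw [(schwartz_withSeminorms ℂ V ℂ).image_isVonNBounded_iff_seminorm_bounded]
    rintro ⟨k, l⟩
    obtain ⟨C, hC0, hC⟩ := aux_slice_bound H N k l
    refine ⟨C + 1, by positivity, fun x _ => ?_⟩
    simp only [F, map_smul_eq_mul]
    have hp : 0 < (1 + ‖x‖) ^ N := by positivity
    have : SchwartzMap.seminorm ℂ k l (auxSlice H x) ≤ C / (1 + ‖x‖) ^ N := by
      refine SchwartzMap.seminorm_le_bound ℂ k l _ (by positivity) fun y => ?_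
      rw [le_div_iff₀ hp, mul_comm]
      exact hC x y
    rw [le_div_iff₀ hp, mul_comm] at this
    rw [Complex.norm_real, Real.norm_of_nonneg hp.le]
    exact lt_of_le_of_lt this (by linarith)
  have hb2 := hb.image (SchwartzMap.fourierTransformCLM ℂ : 𝓢(V, ℂ) →L[ℂ] 𝓢(V, ℂ))
  rw [← Set.image_comp, (schwartz_withSeminorms ℂ V ℂ).image_isVonNBounded_iff_seminorm_bounded]
    at hb2
  obtain ⟨r, -, hr⟩ := hb2 (k, 0)
  refine ⟨r, fun x w => ?_⟩
  have h1 := hr x (Set.mem_univ _)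
  have hp : 0 < (1 + ‖x‖) ^ N := by positivity
  simp only [F, Function.comp, map_smul] at h1
  rw [map_smul_eq_mul, Complex.norm_real, Real.norm_of_nonneg hp.le] at h1
  refine le_trans ?_ h1.le
  refine mul_le_mul_of_nonneg_left ?_ hp.le
  have h2 := SchwartzMap.le_seminorm ℂ k 0 (SchwartzMap.fourierTransformCLM ℂ (auxSlice H x)) w
  rw [norm_iteratedFDeriv_zero] at h2
  exact h2

lemma aux_fourier_bound (H : 𝓢(E × V, ℂ)) (N k : ℕ) :
    ∃ C : ℝ, ∀ x w, (1 + ‖x‖) ^ N * (1 + ‖w‖) ^ k * ‖𝓕 (fun y => H (x, y)) w‖ ≤ C := by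
  obtain ⟨C0, h0⟩ := aux_fourier_bound0 H N 0
  obtain ⟨C1, h1⟩ := aux_fourier_bound0 H N k
  refine ⟨2 ^ k * (C0 + C1), fun x w => ?_⟩
  have h2 : (1 + ‖w‖) ^ k ≤ 2 ^ k * (1 + ‖w‖ ^ k) := by
    rcases le_total 1 ‖w‖ with h | h
    · calc (1 + ‖w‖) ^ k ≤ (2 * ‖w‖) ^ k := by gcongr; linarith
        _ = 2 ^ k * ‖w‖ ^ k := mul_pow _ _ _
        _ ≤ _ := by gcongr; linarith
    · calc (1 + ‖w‖) ^ k ≤ 2 ^ k := by gcongr; linarith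
        _ ≤ _ := le_mul_of_one_le_right (by positivity) (by have := pow_nonneg (norm_nonneg w) k; linarith)
  calc (1 + ‖x‖) ^ N * (1 + ‖w‖) ^ k * ‖𝓕 (fun y => H (x, y)) w‖
      ≤ (1 + ‖x‖) ^ N * (2 ^ k * (1 + ‖w‖ ^ k)) * ‖𝓕 (fun y => H (x, y)) w‖ := by gcongr
    _ = 2 ^ k * ((1 + ‖x‖) ^ N * (‖w‖ ^ 0 * ‖𝓕 (fun y => H (x, y)) w‖) +
        (1 + ‖x‖) ^ N * (‖w‖ ^ k * ‖𝓕 (fun y => H (x, y)) w‖)) := by ring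
    _ ≤ _ := by gcongr; exacts [h0 x w, h1 x w]

variable [FiniteDimensional ℝ E] [MeasureSpace E] [BorelSpace E]
  [(volume : Measure E).IsAddHaarMeasure]

lemma aux_integrable (H : 𝓢(E × V, ℂ)) :
    Integrable (fun z : E × V => 𝓕 (fun y => H (z.1, y)) z.2) := by
  set N := Module.finrank ℝ E + 1
  set k := Module.finrank ℝ V + 1
  obtain ⟨C, hC⟩ := aux_fourier_bound H N k
  have i1 : Integrable (fun x : E => (1 + ‖x‖) ^ (-(N : ℝ))) :=
    integrable_one_add_norm (by simp [N])
  have i2 : Integrable (fun x : V => (1 + ‖x‖) ^ (-(k : ℝ))) :=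
    integrable_one_add_norm (by simp [k])
  refine ((i1.mul_prod i2).const_mul C).mono' ?_ ?_
  · simp_rw [Real.fourier_eq']
    have : Continuous (fun q : (E × V) × V =>
        cexp (↑(-2 * π * inner ℝ q.2 q.1.2) * I) • H (q.1.1, q.2)) := by
      have := H.continuous
      fun_prop
    exact this.aestronglyMeasurable.integral_prod_right'
  · refine Filter.Eventually.of_forall fun z => ?_
    have := hC z.1 z.2
    have h1 : 0 < (1 + ‖z.1‖) ^ N := by positivity
    have h2 : 0 < (1 + ‖z.2‖) ^ k := by positivity
    rw [Real.rpow_neg (by positivity), Real.rpow_neg (by positivity), Real.rpow_natCast,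
      Real.rpow_natCast, ← mul_inv, ← div_eq_mul_inv, le_div_iff₀ (by positivity), mul_comm]
    exact this

lemma aux_core (H : 𝓢(E × V, ℂ)) (c : E → ℂ) (hc : Continuous c) (hc1 : ∀ x, ‖c x‖ = 1) (x : V) :
    ∫ z : E × V, cexp (↑(2 * π * inner ℝ z.2 x) * I) * c z.1 * 𝓕 (fun y => H (z.1, y)) z.2
      = ∫ u, c u * H (u, x) := by
  have hHc := H.continuous
  have hK : Integrable (fun z : E × V => c z.1 * 𝓕 (fun y => H (z.1, y)) z.2) :=
    (aux_integrable H).bdd_mul (c := 1) (hc.comp continuous_fst).aestronglyMeasurable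
      (Filter.Eventually.of_forall fun z => (hc1 z.1).le)
  have hK2 : Integrable (fun z : E × V => cexp (↑(2 * π * inner ℝ z.2 x) * I) * (c z.1 *
      𝓕 (fun y => H (z.1, y)) z.2)) := by
    refine hK.bdd_mul (c := 1) (by fun_prop)
      (Filter.Eventually.of_forall fun z => (Complex.norm_exp_ofReal_mul_I _).le)
  have : (volume : Measure (E × V)).IsAddHaarMeasure :=
    inferInstanceAs ((volume : Measure E).prod (volume : Measure V)).IsAddHaarMeasure
  have hHi : Integrable (fun z : E × V => c z.1 * H z) :=
    H.integrable.bdd_mul (c := 1) (hc.comp continuous_fst).aestronglyMeasurable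
      (Filter.Eventually.of_forall fun z => (hc1 z.1).le)
  let g : V → ℂ := fun y => ∫ u, c u * H (u, y)
  have hgi : Integrable g := hHi.integral_prod_right
  have hgc : Continuous g := by
    obtain ⟨C, hC0, hC⟩ := aux_decay H (Module.finrank ℝ E + 1) 0
    have i1 : Integrable (fun x : E => (1 + ‖x‖) ^ (-((Module.finrank ℝ E + 1 : ℕ) : ℝ))) :=
      integrable_one_add_norm (by simp)
    refine continuous_of_dominated (bound := fun u => C * (1 + ‖u‖) ^
      (-((Module.finrank ℝ E + 1 : ℕ) : ℝ))) ?_ ?_ (i1.const_mul C) ?_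
    · intro y
      exact (by fun_prop : Continuous fun u => c u * H (u, y)).aestronglyMeasurable
    · intro y
      refine Filter.Eventually.of_forall fun u => ?_
      have := hC (u, y)
      rw [norm_iteratedFDeriv_zero] at this
      rw [norm_mul, hc1, one_mul, Real.rpow_neg (by positivity), Real.rpow_natCast,
        ← div_eq_mul_inv, le_div_iff₀ (by positivity), mul_comm]
      refine le_trans ?_ this
      have h1 : ‖u‖ ≤ ‖(u, y)‖ := le_max_left _ _
      gcongr
    · exact Filter.Eventually.of_forall fun u => by fun_prop
  have hFg : ∀ w, 𝓕 g w = ∫ u, c u * 𝓕 (fun y => H (u, y)) w := by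
    intro w
    have hHw : Integrable (fun z : E × V => cexp (↑(-2 * π * inner ℝ z.2 w) * I) *
        (c z.1 * H z)) := by
      refine hHi.bdd_mul (c := 1) (by fun_prop)
        (Filter.Eventually.of_forall fun z => (Complex.norm_exp_ofReal_mul_I _).le)
    simp_rw [Real.fourier_eq', g, smul_eq_mul, ← integral_const_mul]
    rw [← integral_integral_swap]
    · refine integral_congr_ae (Filter.Eventually.of_forall fun u => ?_)
      refine integral_congr_ae (Filter.Eventually.of_forall fun v => ?_)
      simp only
      ring
    · exact hHw
  have hFgi : Integrable (𝓕 g) := by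
    have := hK.integral_prod_right
    refine this.congr (Filter.Eventually.of_forall fun w => (hFg w).symm)
  have hinv := congrFun (hgc.fourierInv_fourier_eq hgi hFgi) x
  change _ = g x
  rw [← hinv, Real.fourierInv_eq']
  simp_rw [mul_assoc (cexp _)]
  rw [Measure.volume_eq_prod, integral_prod_symm _ hK2]
  refine integral_congr_ae (Filter.Eventually.of_forall fun w => ?_)
  simp only [smul_eq_mul]
  rw [hFg, integral_const_mul]

end aux2

/-- the linear change of variables -/
def auxEquiv (n : ℕ) (τ κ : ℝ) (hκ : κ ≠ 0) :
    ((Fin n → ℝ) × EuclideanSpace ℝ (Fin n)) ≃L[ℝ] ((Fin n → ℝ) × (Fin n → ℝ)) :=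
  LinearEquiv.toContinuousLinearEquiv
    { toFun := fun z => (z.1 + τ • (κ • z.2.ofLp), z.1 - (1 - τ) • (κ • z.2.ofLp))
      invFun := fun q => (q.1 - τ • (q.1 - q.2), WithLp.toLp 2 (κ⁻¹ • (q.1 - q.2)))
      map_add' := by
        intro a b
        ext i <;> simp <;> ring
      map_smul' := by
        intro a b
        ext i <;> simp <;> ring
      left_inv := by
        intro z
        ext i
        · simp
        · simp; field_simp
      right_inv := by
        intro q
        ext i
        · simp; field_simp; ring
        · simp; field_simp; ring }

/-- the Schwartz function `(x, v) ↦ ψ (x + τ κ v) conj (φ (x - (1 - τ) κ v))` -/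
def auxH {n : ℕ} (τ κ : ℝ) (hκ : κ ≠ 0) (ψ φ : 𝓢(Fin n → ℝ, ℂ)) :
    𝓢((Fin n → ℝ) × EuclideanSpace ℝ (Fin n), ℂ) :=
  SchwartzMap.compCLMOfContinuousLinearEquiv ℝ (auxEquiv n τ κ hκ)
    (auxTensor ψ (SchwartzMap.postcompCLM (𝕜 := ℝ) (Complex.conjCLE : ℂ →L[ℝ] ℂ) φ))

lemma auxH_apply {n : ℕ} (τ κ : ℝ) (hκ : κ ≠ 0) (ψ φ : 𝓢(Fin n → ℝ, ℂ))
    (x : Fin n → ℝ) (v : EuclideanSpace ℝ (Fin n)) :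
    auxH τ κ hκ ψ φ (x, v) = ψ (x + τ • (κ • v.ofLp)) *
      (starRingEnd ℂ) (φ (x - (1 - τ) • (κ • v.ofLp))) := rfl

lemma aux_inner {n : ℕ} (v w : EuclideanSpace ℝ (Fin n)) :
    inner ℝ v w = dotR w.ofLp v.ofLp := by
  simp [dotR, PiLp.inner_apply]

lemma aux_dot_smul {n : ℕ} (p y : Fin n → ℝ) (c : ℝ) : dotR p (c • y) = c * dotR p y := by
  simp only [dotR, Pi.smul_apply, smul_eq_mul, Finset.mul_sum]
  exact Finset.sum_congr rfl fun i _ => by ring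

lemma aux_dot_sub {n : ℕ} (p y z : Fin n → ℝ) : dotR p (y - z) = dotR p y - dotR p z := by
  simp [dotR, mul_sub, Finset.sum_sub_distrib]

lemma aux_wig (hbar : ℝ) (hh : 0 < hbar) (n : ℕ) (τ : ℝ) (hκ : 2 * π * hbar ≠ 0)
    (ψ φ : 𝓢(Fin n → ℝ, ℂ)) (x : Fin n → ℝ) (w : EuclideanSpace ℝ (Fin n)) :
    WigTau hbar τ ψ φ x w.ofLp = 𝓕 (fun y => auxH τ (2 * π * hbar) hκ ψ φ (x, y)) w := by
  have hκ0 : 0 < 2 * π * hbar := by positivity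
  rw [Real.fourier_eq', WigTau]
  simp_rw [auxH_apply, aux_inner]
  have h1 := (PiLp.volume_preserving_ofLp (Fin n)).integral_comp
    (MeasurableEquiv.toLp 2 (Fin n → ℝ)).symm.measurableEmbedding
    (fun y => cexp (↑(-2 * π * dotR w.ofLp y) * I) • (ψ (x + τ • ((2 * π * hbar) • y)) *
      (starRingEnd ℂ) (φ (x - (1 - τ) • ((2 * π * hbar) • y)))))
  rw [h1]
  have h2 := Measure.integral_comp_smul (volume : Measure (Fin n → ℝ))
    (fun y => cexp (-(I / (hbar : ℂ)) * (dotR w.ofLp y : ℝ)) *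
        ψ (x + τ • y) * (starRingEnd ℂ) (φ (x - (1 - τ) • y))) (2 * π * hbar)
  rw [abs_of_pos (by positivity)] at h2
  simp only [Module.finrank_fin_fun, Complex.real_smul] at h2
  rw [Complex.ofReal_inv] at h2
  rw [← h2]
  refine integral_congr_ae (Filter.Eventually.of_forall fun y => ?_)
  simp only [smul_eq_mul, mul_assoc]
  rw [aux_dot_smul]
  congr 2
  have : (hbar : ℂ) ≠ 0 := by exact_mod_cast hh.ne'
  push_cast
  field_simp

/-- The symplectic Fourier transform of the `τ`-Wigner distribution is the
phase-modulated ambiguity function: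
`F_σ(Wig_τ(ψ,φ))(z) = e^((i/(2ħ))(2τ−1)p·x) Amb(ψ,φ)(z)`. -/
theorem symplFT_wigTau (hbar : ℝ) (hh : 0 < hbar) (n : ℕ) (hn : 1 ≤ n) (τ : ℝ)
    (ψ φ : SchwartzMap (Fin n → ℝ) ℂ) (x p : Fin n → ℝ) :
    symplFT hbar (fun z => WigTau hbar τ (⇑ψ) (⇑φ) z.1 z.2) (x, p) =
      Complex.exp ((Complex.I / ((2 * hbar : ℝ) : ℂ)) *
          (((2 * τ - 1) * dotR p x : ℝ) : ℂ)) * Amb hbar (⇑ψ) (⇑φ) x p := by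
  have hκ0 : 0 < 2 * π * hbar := by positivity
  have hκ := hκ0.ne'
  have hhC : (hbar : ℂ) ≠ 0 := by exact_mod_cast hh.ne'
  have hπC : (π : ℂ) ≠ 0 := by exact_mod_cast Real.pi_ne_zero
  have hcore := aux_core (auxH τ (2 * π * hbar) hκ ψ φ)
    (fun u => cexp (((-(dotR p u / hbar) : ℝ) : ℂ) * I))
    (by unfold dotR; fun_prop) (fun u => Complex.norm_exp_ofReal_mul_I _)
    (WithLp.toLp 2 ((2 * π * hbar)⁻¹ • x))
  have hmp : MeasurePreserving (MeasurableEquiv.prodCongr (MeasurableEquiv.refl (Fin n → ℝ))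
      (MeasurableEquiv.toLp 2 (Fin n → ℝ))) volume volume :=
    (MeasurePreserving.id volume).prod (PiLp.volume_preserving_toLp (Fin n))
  rw [← hmp.integral_comp'] at hcore
  unfold symplFT Amb
  rw [mul_left_comm]
  congr 1
  have hL : ∀ z : (Fin n → ℝ) × (Fin n → ℝ),
      cexp (-(I / (hbar : ℂ)) * ((dotR (x, p).2 z.1 - dotR z.2 (x, p).1 : ℝ) : ℂ)) *
        WigTau hbar τ ψ φ z.1 z.2 =
      cexp (↑(2 * π * inner ℝ (WithLp.toLp 2 z.2) (WithLp.toLp 2 ((2 * π * hbar)⁻¹ • x))) * I) *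
        cexp (((-(dotR p z.1 / hbar) : ℝ) : ℂ) * I) *
        𝓕 (fun y => auxH τ (2 * π * hbar) hκ ψ φ (z.1, y)) (WithLp.toLp 2 z.2) := by
    intro z
    rw [← aux_wig hbar hh n τ hκ, ← Complex.exp_add, real_inner_comm, aux_inner]
    congr 2
    simp only [aux_dot_smul]
    push_cast
    field_simp
    ring
  simp_rw [hL]
  refine hcore.trans ?_
  rw [← integral_sub_right_eq_self _ ((τ - 1 / 2) • x), ← integral_const_mul]
  refine integral_congr_ae (Filter.Eventually.of_forall fun u => ?_)
  simp only [auxH_apply, smul_inv_smul₀ hκ]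
  have e1 : u - (τ - 1 / 2) • x + τ • x = u + (1 / 2 : ℝ) • x := by module
  have e2 : u - (τ - 1 / 2) • x - (1 - τ) • x = u - (1 / 2 : ℝ) • x := by module
  rw [e1, e2, aux_dot_sub, aux_dot_smul, ← mul_assoc, ← mul_assoc, ← mul_assoc,
    ← Complex.exp_add]
  congr 3
  push_cast
  field_simp
  ring

end
end

section
/- Let L be an invertible real n×n matrix, and define the metaplectic dilation M̂_L ψ(x) = √|det L| · ψ(Lx) for Schwartz ψ. Then for every Schwartz symbol a : ℝ²ⁿ → ℂ, every Schwartz function ψ and every x ∈ ℝⁿ, M̂_L((A_BJψ))(x) = (B_BJ(M̂_Lψ))(x), where B_BJ is the Born–Jordan operator with symbol b(x,p) = a(Lx, (L⁻¹)ᵀ p) = (a ∘ s⁻¹)(x,p) for the symplectic map s(x,p) = (L⁻¹x, Lᵀp). That is, Born–Jordan quantization is covariant under the symplectic dilations: M̂_L Op_BJ(a) M̂_L⁻¹ = Op_BJ(a ∘ s⁻¹). -/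
open MeasureTheory Real Complex

noncomputable section

/-- The metaplectic dilation `M̂_L ψ(x) = √|det L| ψ(Lx)`. -/
def MetaDil {n : ℕ} (L : Matrix (Fin n) (Fin n) ℝ) (f : (Fin n → ℝ) → ℂ)
    (x : Fin n → ℝ) : ℂ :=
  ((Real.sqrt |L.det| : ℝ) : ℂ) * f (L.mulVec x)

theorem integral_comp_mulVec_aux {n : ℕ} (M : Matrix (Fin n) (Fin n) ℝ) (hM : M.det ≠ 0)
    (f : (Fin n → ℝ) → ℂ) :
    ((|M.det| : ℝ) : ℂ) * ∫ x, f (M.mulVec x) = ∫ x, f x := by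
  have hemb : MeasurableEmbedding (Matrix.toLin' M) := by
    let e := (Matrix.toLin' M).equivOfDetNeZero (by simpa using hM)
    exact e.toContinuousLinearEquiv.toHomeomorph.measurableEmbedding
  have h := hemb.integral_map (μ := volume) f
  rw [Real.map_matrix_volume_pi_eq_smul_volume_pi hM, integral_smul_measure,
    ENNReal.toReal_ofReal (abs_nonneg _)] at h
  simp only [Matrix.toLin'_apply] at h
  rw [← h, abs_inv, Complex.real_smul, ← mul_assoc, ← Complex.ofReal_mul,
    mul_inv_cancel₀ (abs_ne_zero.mpr hM)]
  simp

theorem shubin_kernel_aux (hbar : ℝ) {n : ℕ} (L : Matrix (Fin n) (Fin n) ℝ) (hL : IsUnit L.det)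
    (g : (Fin n → ℝ) → ℂ) (u : Fin n → ℝ) :
    (∫ p : Fin n → ℝ, Complex.exp ((Complex.I / (hbar : ℂ)) * (dotR p u : ℝ)) *
        g ((L⁻¹).transpose.mulVec p)) =
      ((|L.det| : ℝ) : ℂ) *
        ∫ p : Fin n → ℝ, Complex.exp ((Complex.I / (hbar : ℂ)) * (dotR p (L.mulVec u) : ℝ)) *
          g p := by
  have hd : L.transpose.det ≠ 0 := by rw [Matrix.det_transpose]; exact hL.ne_zero
  rw [← integral_comp_mulVec_aux L.transpose hd, Matrix.det_transpose]
  congr 2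
  funext q
  have h1 : dotR (L.transpose.mulVec q) u = dotR q (L.mulVec u) := by
    change dotProduct (L.transpose.mulVec q) u = dotProduct q (L.mulVec u)
    rw [Matrix.mulVec_transpose, Matrix.dotProduct_mulVec]
  have h2 : (L⁻¹).transpose.mulVec (L.transpose.mulVec q) = q := by
    rw [Matrix.mulVec_mulVec, ← Matrix.transpose_mul, Matrix.mul_nonsing_inv _ hL]
    simp
  rw [h1, h2]

/-- Symplectic covariance of Born–Jordan quantization under dilations:
`M̂_L Op_BJ(a) M̂_L⁻¹ = Op_BJ(a ∘ s⁻¹)` with `s(x,p) = (L⁻¹x, Lᵀp)`, i.e.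
`M̂_L(A_BJ ψ) = B_BJ(M̂_L ψ)` where `B_BJ` has symbol `b(x,p) = a(Lx, (L⁻¹)ᵀp)`. -/
theorem bjOp_metaplectic_dilation_covariance (hbar : ℝ) (hh : 0 < hbar)
    (n : ℕ) (hn : 1 ≤ n) (L : Matrix (Fin n) (Fin n) ℝ) (hL : IsUnit L.det)
    (a : SchwartzMap ((Fin n → ℝ) × (Fin n → ℝ)) ℂ)
    (ψ : SchwartzMap (Fin n → ℝ) ℂ) (x : Fin n → ℝ) :
    MetaDil L (BJOp hbar (⇑a) (⇑ψ)) x =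
      BJOp hbar (fun z => a (L.mulVec z.1, (L⁻¹).transpose.mulVec z.2))
        (MetaDil L (⇑ψ)) x := by
  unfold MetaDil BJOp
  rw [← intervalIntegral.integral_const_mul]
  congr 1
  funext τ
  unfold ShubinOp
  rw [mul_left_comm]
  congr 1
  rw [← integral_comp_mulVec_aux L hL.ne_zero, ← mul_assoc, ← integral_const_mul]
  congr 1
  funext y
  simp only []
  rw [shubin_kernel_aux hbar L hL (fun p => a (L.mulVec (τ • x + (1 - τ) • y), p)) (x - y)]
  simp only [Matrix.mulVec_add, Matrix.mulVec_sub, Matrix.mulVec_smul]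
  ring

end
end
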